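/- arXiv:1405.6866 — 3 statements merged into one kernel-verified Lean document; each statement's English description precedes it below -/
import Mathlib

section
/- Let X be a separable metrizable space. Then X is countable dimensional if and only if X is NOT 0-avoiding, i.e., no countable set F of partial continuous real-valued functions on X avoids the class of all partial continuous functions from ℝ to ℝ. -/
open Set

/-- A partial continuous map from `X` to `Y`: a continuous map defined on a subspace of `X`. -/
structure PartialContMap (X Y : Type*) [TopologicalSpace X] [TopologicalSpace Y] where
  dom : Set X
  toFun : dom → Y
  cont : Continuous toFun

/-- A countable `F ⊆ C(⊆X, ℝ)` avoids the class of all partial continuous functions from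
`ℝ` to `ℝ`: for every countable `G ⊆ C(⊆X, ℝ)` and every countable set `H` of partial
continuous functions from `ℝ` to `ℝ` there is `x ∈ X` such that for every `g ∈ G` with
`x ∈ dom g` there is `f ∈ F` with `x ∈ dom f` and `f x ≠ h (g x)` for all `h ∈ H` with
`g x ∈ dom h`. -/
def Avoids {X : Type*} [TopologicalSpace X] (F : Set (PartialContMap X ℝ)) : Prop :=
  ∀ G : Set (PartialContMap X ℝ), G.Countable →
  ∀ H : Set (PartialContMap ℝ ℝ), H.Countable →
  ∃ x : X, ∀ g ∈ G, ∀ hgx : x ∈ g.dom,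
    ∃ f ∈ F, ∃ hfx : x ∈ f.dom,
      ∀ h ∈ H, ∀ hh : g.toFun ⟨x, hgx⟩ ∈ h.dom,
        f.toFun ⟨x, hfx⟩ ≠ h.toFun ⟨g.toFun ⟨x, hgx⟩, hh⟩

/-- `X` is 0-avoiding: some countable set of partial continuous real-valued functions on `X`
avoids the class of all partial continuous functions from `ℝ` to `ℝ`. -/
def ZeroAvoiding (X : Type*) [TopologicalSpace X] : Prop :=
  ∃ F : Set (PartialContMap X ℝ), F.Countable ∧ Avoids F

/-- `X` is countable dimensional: `X` is a countable union of zero-dimensional subspaces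
(subspaces whose topology has a basis of clopen sets). -/
def CountableDimensional (X : Type*) [TopologicalSpace X] : Prop :=
  ∃ A : ℕ → Set X, (⋃ n, A n) = univ ∧
    ∀ n, ∃ B : Set (Set ↥(A n)),
      TopologicalSpace.IsTopologicalBasis B ∧ ∀ s ∈ B, IsClopen s

/-!
If `X` is a countable union of zero-dimensional subspaces `A n`, embed each `A n` in the Cantor set
by a map `g n`. Every partial function `f` on `X` is determined on `A n` by `g n`, through the
partial function `f ∘ (g n)⁻¹` of a real variable, so no countable family avoids.

Conversely, let `u j` be countably many functions `X → ℝ` such that the sets `{u j < 1}`, with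
`{u j ≤ 0}` inside them, shrink to every point. If they do not avoid, then `X` is a countable union
of pieces, on each of which every value `u j x` is of the form `h (g x)` with `h` in a countable
family and `g` continuous with values in a zero-dimensional space `Z`. Diagonalizing against the
family in Cantor space gives continuous thresholds `ρ t : Z → [0, 1]` such that, near each point,
`u j` avoids `ρ t ∘ g` for all large `t`; hence the sets `{u j < ρ t ∘ g}` are, near each point and
for all large `t`, clopen and separate `{u j ≤ 0}` from `{u j ≥ 1}`.

How large `t` has to be is bounded by a continuous function `f`. Taking `t = ⌈f⌉` for one pair of
disjoint closed sets and `t = ⌈f + 1/2⌉` for another gives partitions whose frontiers lie in level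
sets of `f` that do not meet. By iteration, any pair has a partition whose frontier misses the
frontier of some partition of each pair in a given sequence. Applied to a base, this yields open
sets with zero-dimensional frontiers, and the complement of the union of these frontiers is
zero-dimensional as well.
-/

open TopologicalSpace Topology Filter
open scoped Function

section ZeroDimensional

variable {X Y : Type*} [TopologicalSpace X] [TopologicalSpace Y]

lemma hasSmallInductiveDimensionLE_zero_iff_exists_basis :
    HasSmallInductiveDimensionLE X 0 ↔
      ∃ B : Set (Set X), IsTopologicalBasis B ∧ ∀ s ∈ B, IsClopen s := by
  refine hasSmallInductiveDimensionLT_one_iff.trans ⟨fun h => ⟨_, h, fun _ hs => hs⟩, ?_⟩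
  rintro ⟨B, hB, hBc⟩
  exact hB.of_isOpen_of_subset (fun _ hs => IsClopen.isOpen hs) hBc

lemma hasSmallInductiveDimensionLE_zero_of_isInducing [HasSmallInductiveDimensionLE Y 0]
    {f : X → Y} (hf : IsInducing f) : HasSmallInductiveDimensionLE X 0 := by
  obtain ⟨B, hB, hBc⟩ := hasSmallInductiveDimensionLE_zero_iff_exists_basis.1 ‹_›
  exact hasSmallInductiveDimensionLE_zero_iff_exists_basis.2
    ⟨_, hB.isInducing hf, forall_mem_image.2 fun s hs => (hBc s hs).preimage hf.continuous⟩

lemma hasSmallInductiveDimensionLE_zero_of_frontier_disjoint {A : Set X}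
    (h : ∀ x ∈ A, ∀ N ∈ 𝓝 x, ∃ V ⊆ N, IsOpen V ∧ x ∈ V ∧ Disjoint (frontier V) A) :
    HasSmallInductiveDimensionLE A 0 := by
  refine hasSmallInductiveDimensionLT_one_iff.2 <|
    isTopologicalBasis_of_isOpen_of_nhds (fun _ hs => IsClopen.isOpen hs) fun x U hxU hU => ?_
  obtain ⟨N, hN, hNU⟩ := mem_nhds_subtype A x U |>.1 (hU.mem_nhds hxU)
  obtain ⟨V, hVN, hV, hxV, hVA⟩ := h x x.2 N hN
  exact ⟨_, isClopen_preimage_val hV hVA, hxV, (preimage_mono hVN).trans hNU⟩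

lemma exists_seq_isClopen_isTopologicalBasis [SecondCountableTopology X]
    [HasSmallInductiveDimensionLE X 0] :
    ∃ c : ℕ → Set X, IsTopologicalBasis (range c) ∧ ∀ n, IsClopen (c n) := by
  have hclopen : IsTopologicalBasis {s : Set X | IsClopen s} :=
    hasSmallInductiveDimensionLT_one_iff.1 ‹_›
  obtain ⟨B, hBc, hB_countable, hB⟩ := hclopen.exists_countable
  obtain ⟨c, hc⟩ := (hB_countable.insert ∅).exists_eq_range (insert_nonempty ∅ B)
  have hBc' : insert ∅ B ⊆ {s : Set X | IsClopen s} := insert_subset isClopen_empty hBc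
  exact ⟨c, hc ▸ hB.insert_empty, fun n => hBc' (hc ▸ mem_range_self n)⟩

end ZeroDimensional

section CountableDimensional

variable {X ι : Type*} [TopologicalSpace X] [Countable ι]

lemma CountableDimensional.of_iUnion {A : ι → Set X} (hA : ⋃ i, A i = univ)
    (h : ∀ i, HasSmallInductiveDimensionLE (A i) 0) : CountableDimensional X := by
  have hs (s : Option ι) : HasSmallInductiveDimensionLE ↥(s.elim ∅ A) 0 := by
    cases s with
    | none => exact inferInstanceAs (HasSmallInductiveDimensionLE (∅ : Set X) 0)
    | some i => exact h i
  obtain ⟨e, he⟩ := exists_surjective_nat (Option ι)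
  refine ⟨fun n => (e n).elim ∅ A, ?_, fun n =>
    hasSmallInductiveDimensionLE_zero_iff_exists_basis.1 (hs (e n))⟩
  rw [he.iUnion_comp fun s : Option ι => s.elim ∅ A, iUnion_option]
  simpa only [Option.elim, empty_union] using hA

lemma CountableDimensional.exists_iUnion (h : CountableDimensional X) :
    ∃ A : ℕ → Set X, ⋃ n, A n = univ ∧ ∀ n, HasSmallInductiveDimensionLE (A n) 0 := by
  simpa only [CountableDimensional, hasSmallInductiveDimensionLE_zero_iff_exists_basis] using h

lemma CountableDimensional.of_iUnion_countableDimensional {A : ι → Set X} (hA : ⋃ i, A i = univ)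
    (h : ∀ i, CountableDimensional (A i)) : CountableDimensional X := by
  choose S hS hS₀ using fun i => (h i).exists_iUnion
  refine .of_iUnion (ι := ι × ℕ) (A := fun p => Subtype.val '' S p.1 p.2) ?_ fun p => ?_
  · rw [iUnion_prod', ← hA]
    exact iUnion_congr fun i => by
      simp only [← image_iUnion, hS, image_univ, Subtype.range_val]
  · have := hS₀ p.1 p.2
    exact hasSmallInductiveDimensionLE_zero_of_isInducing
      (IsEmbedding.subtypeVal.homeomorphImage (S p.1 p.2)).symm.isInducing

end CountableDimensional

lemma hasSmallInductiveDimensionLE_zero_irrational :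
    HasSmallInductiveDimensionLE {x : ℝ | Irrational x} 0 := by
  refine hasSmallInductiveDimensionLE_zero_of_frontier_disjoint fun x _ N hN => ?_
  obtain ⟨V, hV, hxV, hVN⟩ := Real.isTopologicalBasis_Ioo_rat.mem_nhds_iff.1 hN
  obtain ⟨a, b, hab, rfl⟩ : ∃ a b : ℚ, a < b ∧ Ioo (a : ℝ) b = V := by
    simpa only [mem_iUnion, mem_singleton_iff, exists_prop, eq_comm] using hV
  refine ⟨_, hVN, isOpen_Ioo, hxV, ?_⟩
  rw [frontier_Ioo (Rat.cast_lt.2 hab), disjoint_left]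
  rintro _ (rfl | rfl)
  exacts [a.not_irrational, b.not_irrational]

lemma countableDimensional_real : CountableDimensional ℝ := by
  refine .of_iUnion (A := fun o : Option ℚ => o.elim {x | Irrational x} fun q => {(q : ℝ)}) ?_ ?_
  · rw [iUnion_option]
    simp only [Option.elim, iUnion_singleton_eq_range]
    exact compl_union_self _
  · rintro (_ | q)
    · exact hasSmallInductiveDimensionLE_zero_irrational
    · exact hasSmallInductiveDimensionLE_zero_iff_exists_basis.2
        ⟨_, isTopologicalBasis_singletons ({(q : ℝ)} : Set ℝ),
          fun s _ => isClopen_discrete (X := ({(q : ℝ)} : Set ℝ)) s⟩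

namespace PartialContMap

variable {X Y Z : Type*} [TopologicalSpace X] [TopologicalSpace Y] [TopologicalSpace Z]

/-- The graph of a partial map, as a set of pairs. Stating `f x = y` as `(x, y) ∈ f.graph` avoids
carrying a proof of `x ∈ f.dom`. -/
def graph (f : PartialContMap X Y) : Set (X × Y) :=
  {p | ∃ hx : p.1 ∈ f.dom, f.toFun ⟨p.1, hx⟩ = p.2}

lemma mem_graph {f : PartialContMap X Y} {x : X} {y : Y} :
    (x, y) ∈ f.graph ↔ ∃ hx : x ∈ f.dom, f.toFun ⟨x, hx⟩ = y :=
  Iff.rfl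

/-- The composition of partial maps, defined wherever it makes sense. -/
def comp (h : PartialContMap Y Z) (g : PartialContMap X Y) : PartialContMap X Z where
  dom := {x | ∃ hx : x ∈ g.dom, g.toFun ⟨x, hx⟩ ∈ h.dom}
  toFun x := h.toFun ⟨g.toFun ⟨x, x.2.fst⟩, x.2.snd⟩
  cont := h.cont.comp <| (g.cont.comp <| continuous_subtype_val.subtype_mk _).subtype_mk _

lemma mem_graph_comp {h : PartialContMap Y Z} {g : PartialContMap X Y} {x : X} {z : Z} :
    (x, z) ∈ (h.comp g).graph ↔ ∃ y, (x, y) ∈ g.graph ∧ (y, z) ∈ h.graph := by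
  simp only [mem_graph]
  constructor
  · rintro ⟨⟨hx, hy⟩, hz⟩
    exact ⟨_, ⟨hx, rfl⟩, hy, hz⟩
  · rintro ⟨_, ⟨hx, rfl⟩, hy, hz⟩
    exact ⟨⟨hx, hy⟩, hz⟩

/-- A continuous map, as a partial map defined everywhere. -/
def ofContinuousMap (f : C(X, Y)) : PartialContMap X Y where
  dom := univ
  toFun x := f x
  cont := f.continuous.comp continuous_subtype_val

lemma mem_graph_ofContinuousMap {f : C(X, Y)} {x : X} {y : Y} :
    (x, y) ∈ (ofContinuousMap f).graph ↔ f x = y :=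
  exists_prop_of_true (mem_univ x)

/-- The inverse of an embedding of a subspace, as a partial map defined on its range. -/
noncomputable def symmOfIsEmbedding {A : Set X} {g : A → Y} (hg : IsEmbedding g) :
    PartialContMap Y X where
  dom := range g
  toFun y := hg.toHomeomorph.symm y
  cont := continuous_subtype_val.comp hg.toHomeomorph.symm.continuous

lemma mem_graph_symmOfIsEmbedding {A : Set X} {g : A → Y} (hg : IsEmbedding g) (x : A) :
    (g x, (x : X)) ∈ (symmOfIsEmbedding hg).graph :=
  ⟨mem_range_self x, congrArg Subtype.val (hg.toHomeomorph.symm_apply_apply x)⟩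

lemma exists_isOpen_forall_graph (f : PartialContMap X Y) {U : Set Y} (hU : IsOpen U) :
    ∃ V : Set X, IsOpen V ∧ ∀ p ∈ f.graph, p.1 ∈ V ↔ p.2 ∈ U := by
  obtain ⟨V, hV, hVU⟩ := isOpen_induced_iff.1 (hU.preimage f.cont)
  refine ⟨V, hV, ?_⟩
  rintro ⟨x, y⟩ hxy
  obtain ⟨hx, rfl⟩ := mem_graph.1 hxy
  exact Set.ext_iff.1 hVU ⟨x, hx⟩

end PartialContMap

open PartialContMap

lemma not_avoids_iff {X : Type*} [TopologicalSpace X] {F : Set (PartialContMap X ℝ)} :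
    ¬ Avoids F ↔ ∃ G : Set (PartialContMap X ℝ), G.Countable ∧
      ∃ H : Set (PartialContMap ℝ ℝ), H.Countable ∧
        ∀ x, ∃ g ∈ G, ∃ y, (x, y) ∈ g.graph ∧
          ∀ f ∈ F, ∀ v, (x, v) ∈ f.graph → ∃ h ∈ H, (y, v) ∈ h.graph := by
  simp only [Avoids, mem_graph]
  push Not
  refine exists_congr fun G => and_congr_right fun _ => exists_congr fun H =>
    and_congr_right fun _ => forall_congr' fun x => exists_congr fun g =>
      and_congr_right fun _ => ?_
  constructor
  · rintro ⟨hx, hg⟩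
    refine ⟨_, ⟨hx, rfl⟩, ?_⟩
    rintro f hf _ ⟨hfx, rfl⟩
    obtain ⟨h, hh, hy, heq⟩ := hg f hf hfx
    exact ⟨h, hh, hy, heq.symm⟩
  · rintro ⟨_, ⟨hx, rfl⟩, hg⟩
    refine ⟨hx, fun f hf hfx => ?_⟩
    obtain ⟨h, hh, hy, heq⟩ := hg f hf _ ⟨hfx, rfl⟩
    exact ⟨h, hh, hy, heq.symm⟩

/-- The embedding of the Cantor space into `[0, 1]` whose range is the ternary Cantor set. -/
noncomputable def cantorEmbedding (b : ℕ → Bool) : ℝ := cantorSetHomeomorphNatToBool.symm b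

lemma isEmbedding_cantorEmbedding : IsEmbedding cantorEmbedding :=
  IsEmbedding.subtypeVal.comp cantorSetHomeomorphNatToBool.symm.isEmbedding

lemma cantorEmbedding_mem_Icc (b : ℕ → Bool) : cantorEmbedding b ∈ Icc (0 : ℝ) 1 :=
  cantorSet_subset_unitInterval (cantorSetHomeomorphNatToBool.symm b).2

lemma isClosedEmbedding_cantorEmbedding : IsClosedEmbedding cantorEmbedding :=
  isEmbedding_cantorEmbedding.continuous.isClosedEmbedding isEmbedding_cantorEmbedding.injective

lemma continuous_boolIndicator_pi {Y : Type*} [TopologicalSpace Y] {S : ℕ → Set Y}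
    (hS : ∀ n, IsClopen (S n)) : Continuous fun y n => (S n).boolIndicator y :=
  continuous_pi fun n => (continuous_boolIndicator_iff_isClopen (S n)).2 (hS n)

lemma exists_isEmbedding_real (Y : Type*) [TopologicalSpace Y] [T0Space Y]
    [SecondCountableTopology Y] [HasSmallInductiveDimensionLE Y 0] :
    ∃ g : Y → ℝ, IsEmbedding g := by
  obtain ⟨c, hc, hclopen⟩ := exists_seq_isClopen_isTopologicalBasis (X := Y)
  let φ : Y → ℕ → Bool := fun y n => (c n).boolIndicator y
  have hφ : Continuous φ := continuous_boolIndicator_pi hclopen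
  have hφ_ind : IsInducing φ := by
    refine isInducing_iff_nhds.2 fun y => le_antisymm hφ.continuousAt.le_comap fun N hN => ?_
    obtain ⟨_, ⟨n, rfl⟩, hyn, hnN⟩ := hc.mem_nhds_iff.1 hN
    have hopen : IsOpen {b : ℕ → Bool | b n = true} :=
      (isOpen_discrete {true}).preimage (continuous_apply (A := fun _ : ℕ => Bool) n)
    exact ⟨_, hopen.mem_nhds (((c n).mem_iff_boolIndicator y).1 hyn),
      fun z hz => hnN (((c n).mem_iff_boolIndicator z).2 hz)⟩
  exact ⟨_, isEmbedding_cantorEmbedding.comp hφ_ind.isEmbedding⟩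

theorem CountableDimensional.not_zeroAvoiding {X : Type*} [TopologicalSpace X] [T0Space X]
    [SecondCountableTopology X] (hX : CountableDimensional X) : ¬ ZeroAvoiding X := by
  rintro ⟨F, hF, hF_avoids⟩
  obtain ⟨A, hA, hA₀⟩ := hX.exists_iUnion
  choose g hg using fun n => exists_isEmbedding_real (A n)
  have : Countable F := hF
  refine not_avoids_iff.2 ⟨range fun n => ⟨A n, g n, (hg n).continuous⟩, countable_range _,
    range fun p : F × ℕ => p.1.1.comp (symmOfIsEmbedding (hg p.2)), countable_range _,
    fun x => ?_⟩ hF_avoids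
  obtain ⟨n, hx⟩ := iUnion_eq_univ_iff.1 hA x
  exact ⟨_, mem_range_self n, g n ⟨x, hx⟩, ⟨hx, rfl⟩, fun f hf v hv => ⟨_, ⟨(⟨f, hf⟩, n), rfl⟩,
    mem_graph_comp.2 ⟨x, mem_graph_symmOfIsEmbedding (hg n) ⟨x, hx⟩, hv⟩⟩⟩

lemma exists_isClopen_pairwise_disjoint_iUnion_eq_union {Y : Type*} [TopologicalSpace Y]
    [SecondCountableTopology Y] [HasSmallInductiveDimensionLE Y 0] {V W : Set Y}
    (hV : IsOpen V) (hW : IsOpen W) :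
    ∃ D : ℕ → Set Y, (∀ n, IsClopen (D n)) ∧ Pairwise (Disjoint on D) ∧
      (∀ n, D n ⊆ V ∨ D n ⊆ W) ∧ ⋃ n, D n = V ∪ W := by
  classical
  obtain ⟨c, hc, hc_clopen⟩ := exists_seq_isClopen_isTopologicalBasis (X := Y)
  let d (n : ℕ) : Set Y := if c n ⊆ V ∨ c n ⊆ W then c n else ∅
  have hd_clopen (n : ℕ) : IsClopen (d n) := by
    unfold d
    split_ifs
    exacts [hc_clopen n, isClopen_empty]
  have hd_subset (n : ℕ) : d n ⊆ V ∨ d n ⊆ W := by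
    unfold d
    split_ifs with hn
    exacts [hn, .inl (empty_subset V)]
  refine ⟨disjointed d, fun n => disjointedRec (fun _ i ht => ht.diff (hd_clopen i)) (hd_clopen n),
    disjoint_disjointed d, fun n => (hd_subset n).imp (disjointed_subset d n).trans
      (disjointed_subset d n).trans, ?_⟩
  rw [iUnion_disjointed]
  refine (iUnion_subset fun n => (hd_subset n).elim (subset_union_of_subset_left · W)
    (subset_union_of_subset_right · V)).antisymm (union_subset (fun y hy => ?_) fun y hy => ?_)
  · obtain ⟨_, ⟨n, rfl⟩, hyn, hnV⟩ := hc.exists_subset_of_mem_open hy hV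
    exact mem_iUnion.2 ⟨n, by rwa [show d n = c n from if_pos (.inl hnV)]⟩
  · obtain ⟨_, ⟨n, rfl⟩, hyn, hnW⟩ := hc.exists_subset_of_mem_open hy hW
    exact mem_iUnion.2 ⟨n, by rwa [show d n = c n from if_pos (.inr hnW)]⟩

lemma exists_isClopen_eventually_mem_or_notMem {Y : Type*} [TopologicalSpace Y]
    [SecondCountableTopology Y] [HasSmallInductiveDimensionLE Y 0] {V W : Set Y}
    (hV : IsOpen V) (hW : IsOpen W) :
    ∃ S : ℕ → Set Y, (∀ n, IsClopen (S n)) ∧ ∀ y ∈ V ∪ W,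
      (y ∈ V ∧ ∀ᶠ q in atTop ×ˢ 𝓝 y, q.2 ∈ S q.1) ∨
      (y ∈ W ∧ ∀ᶠ q in atTop ×ˢ 𝓝 y, q.2 ∉ S q.1) := by
  obtain ⟨D, hD_clopen, hD_disjoint, hD_subset, hD⟩ :=
    exists_isClopen_pairwise_disjoint_iUnion_eq_union hV hW
  refine ⟨fun t => ⋃ n ∈ {n | n ≤ t ∧ D n ⊆ V}, D n, fun t =>
    ((finite_Iic t).subset fun n hn => hn.1).isClopen_biUnion fun n _ => hD_clopen n,
    fun y hy => ?_⟩
  obtain ⟨n, hyn⟩ := mem_iUnion.1 (hD.symm ▸ hy)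
  have hev : ∀ᶠ q : ℕ × Y in atTop ×ˢ 𝓝 y, n ≤ q.1 ∧ q.2 ∈ D n :=
    (eventually_ge_atTop n).prod_mk ((hD_clopen n).isOpen.mem_nhds hyn)
  by_cases hnV : D n ⊆ V
  · exact .inl ⟨hnV hyn, hev.mono fun q hq =>
      mem_biUnion (show n ∈ {n | n ≤ q.1 ∧ D n ⊆ V} from ⟨hq.1, hnV⟩) hq.2⟩
  · refine .inr ⟨(hD_subset n).resolve_left hnV hyn, hev.mono fun q hq hqS => ?_⟩
    obtain ⟨m, ⟨-, hmV⟩, hqm⟩ := mem_iUnion₂.1 hqS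
    have hmn : m ≠ n := by rintro rfl; exact hnV hmV
    exact disjoint_left.1 (hD_disjoint hmn) hqm hq.2

/-- Diagonalization in Cantor space: near a point where `h e` is defined, the `e`-th digit of `r t`
is eventually one that the corresponding value of `h e` does not have. -/
lemma exists_continuous_eventually_ne_graph {Y : Type*} [TopologicalSpace Y]
    [SecondCountableTopology Y] [HasSmallInductiveDimensionLE Y 0] (h : ℕ → PartialContMap Y ℝ) :
    ∃ r : ℕ → Y → ℝ, (∀ t, Continuous (r t)) ∧ (∀ t y, r t y ∈ Icc (0 : ℝ) 1) ∧
      ∀ e, ∀ p ∈ (h e).graph, ∀ᶠ q : ℕ × (Y × ℝ) in atTop ×ˢ 𝓝 p, r q.1 q.2.1 ≠ q.2.2 := by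
  let K (e : ℕ) (b : Bool) : Set ℝ := cantorEmbedding '' {a | a e = b}
  have hK_closed (e b) : IsClosed (K e b) :=
    isClosedEmbedding_cantorEmbedding.isClosedMap _
      ((isClosed_discrete {b}).preimage (continuous_apply (A := fun _ : ℕ => Bool) e))
  have hK_disjoint (e) : Disjoint (K e true) (K e false) := by
    rw [disjoint_image_iff isEmbedding_cantorEmbedding.injective, disjoint_left]
    exact fun a ha ha' => absurd (ha.symm.trans ha') (by decide)
  choose V hV hV_graph using fun e b =>
    (h e).exists_isOpen_forall_graph (hK_closed e b).isOpen_compl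
  choose S hS_clopen hS using fun e =>
    exists_isClopen_eventually_mem_or_notMem (hV e true) (hV e false)
  refine ⟨fun t y => cantorEmbedding fun i => (S i t).boolIndicator y,
    fun t => isEmbedding_cantorEmbedding.continuous.comp
      (continuous_boolIndicator_pi fun i => hS_clopen i t),
    fun t y => cantorEmbedding_mem_Icc _, fun e p hp => ?_⟩
  have key (b : Bool) (hb : p.1 ∈ V e b)
      (hbS : ∀ᶠ q in atTop ×ˢ 𝓝 p.1, (S e q.1).boolIndicator q.2 = b) :
      ∀ᶠ q : ℕ × (Y × ℝ) in atTop ×ˢ 𝓝 p,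
        cantorEmbedding (fun i => (S i q.1).boolIndicator q.2.1) ≠ q.2.2 := by
    have hK : ∀ᶠ v in 𝓝 p.2, v ∉ K e b :=
      (hK_closed e b).isOpen_compl.mem_nhds ((hV_graph e b p hp).1 hb)
    filter_upwards [(tendsto_id.prodMap (continuous_fst.tendsto p)).eventually hbS,
      (continuous_snd.tendsto p).comp tendsto_snd |>.eventually hK] with q hq hqK hq_eq
    exact hqK ⟨_, hq, hq_eq⟩
  have hcover : p.1 ∈ V e true ∪ V e false := by
    rw [mem_union, hV_graph e true p hp, hV_graph e false p hp, ← mem_union, ← compl_inter,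
      (hK_disjoint e).inter_eq, compl_empty]
    trivial
  rcases hS e p.1 hcover with ⟨hpV, hpS⟩ | ⟨hpV, hpS⟩
  · exact key true hpV (hpS.mono fun q => ((S e q.1).mem_iff_boolIndicator q.2).1)
  · exact key false hpV (hpS.mono fun q => ((S e q.1).notMem_iff_boolIndicator q.2).1)

/-- Near the point `x`, the set `S` is a clopen set separating `C` from the complement of `U`. -/
def SeparatesAt {X : Type*} [TopologicalSpace X] (C U S : Set X) (x : X) : Prop :=
  (x ∈ U ∧ S ∈ 𝓝 x) ∨ (x ∉ C ∧ Sᶜ ∈ 𝓝 x)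

/-- There are sets `S 0, S 1, …` such that every point has a neighbourhood on which all but finitely
many of them are clopen and separate `C` from the complement of `U`. -/
def EventuallySeparated {X : Type*} [TopologicalSpace X] (C U : Set X) : Prop :=
  ∃ S : ℕ → Set X, ∀ x, ∀ᶠ q in atTop ×ˢ 𝓝 x, SeparatesAt C U (S q.1) q.2

section Separation

variable {X : Type*} [TopologicalSpace X] {C U S : Set X} {x : X}

lemma SeparatesAt.mem_and_mem_nhds (h : SeparatesAt C U S x) (hx : x ∈ S) : x ∈ U ∧ S ∈ 𝓝 x :=
  h.resolve_right fun h' => mem_of_mem_nhds h'.2 hx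

lemma SeparatesAt.mem_nhds_compl (h : SeparatesAt C U S x) (hx : x ∉ S) : Sᶜ ∈ 𝓝 x :=
  (h.resolve_left fun h' => hx (mem_of_mem_nhds h'.2)).2

lemma SeparatesAt.mem_of_mem (h : SeparatesAt C U S x) (hx : x ∈ C) : x ∈ S :=
  mem_of_mem_nhds (h.resolve_right fun h' => h'.1 hx).2

lemma eventuallySeparated_of_eventually_ne {u : X → ℝ} {ρ : ℕ → X → ℝ} (hu : Continuous u)
    (hρ : ∀ t, Continuous (ρ t)) (hρ_mem : ∀ t x, ρ t x ∈ Icc (0 : ℝ) 1)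
    (hne : ∀ x, ∀ᶠ q in atTop ×ˢ 𝓝 x, ρ q.1 q.2 ≠ u q.2) :
    EventuallySeparated {x | u x ≤ 0} {x | u x < 1} := by
  refine ⟨fun t => {x | u x < ρ t x}, fun x => (hne x).mono fun q hq => ?_⟩
  obtain ⟨hρ_nonneg, hρ_le_one⟩ := hρ_mem q.1 q.2
  rcases hq.lt_or_gt with hlt | hlt
  · exact .inr ⟨(hρ_nonneg.trans_lt hlt).not_ge,
      mem_of_superset ((isOpen_lt (hρ q.1) hu).mem_nhds hlt) fun z hz hz' =>
        lt_asymm (α := ℝ) hz hz'⟩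
  · exact .inl ⟨hlt.trans_le hρ_le_one, (isOpen_lt hu (hρ q.1)).mem_nhds hlt⟩

/-- The separating set consists of the points for which the first `S i` containing them has
`O i ⊆ U`. -/
lemma EventuallySeparated.of_forall_exists_mem_nhds {K O : ℕ → Set X}
    (h : ∀ i, EventuallySeparated (K i) (O i))
    (hcover : ∀ x, ∃ i, K i ∈ 𝓝 x ∧ (O i ⊆ U ∨ Disjoint (O i) C)) : EventuallySeparated C U := by
  choose S hS using h
  let M (t : ℕ) (z : X) : Set ℕ := {i | (O i ⊆ U ∨ Disjoint (O i) C) ∧ z ∈ S i t}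
  refine ⟨fun t => {z | ∃ i, IsLeast (M t z) i ∧ O i ⊆ U}, fun x => ?_⟩
  obtain ⟨j, hjx, hj⟩ := hcover x
  have hev : ∀ᶠ q in atTop ×ˢ 𝓝 x,
      (∀ i ∈ Iic j, SeparatesAt (K i) (O i) (S i q.1) q.2) ∧ q.2 ∈ K j :=
    (((finite_Iic j).eventually_all).2 fun i _ => hS i x).and (tendsto_snd.eventually hjx)
  refine hev.mono fun ⟨t, z⟩ ⟨hsep, hzj⟩ => ?_
  have hjM : j ∈ M t z := ⟨hj, (hsep j self_mem_Iic).mem_of_mem hzj⟩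
  obtain ⟨i, hi⟩ : ∃ i, IsLeast (M t z) i := ⟨_, isLeast_csInf ⟨j, hjM⟩⟩
  have hij : i ≤ j := hi.2 hjM
  obtain ⟨hzi, hSi⟩ := (hsep i hij).mem_and_mem_nhds hi.1.2
  have hleast : ∀ᶠ w in 𝓝 z, IsLeast (M t w) i := by
    have hlt : ∀ᶠ w in 𝓝 z, ∀ k ∈ Iio i, k ∉ M t w := by
      refine (finite_Iio i).eventually_all.2 fun k hk => ?_
      by_cases hkgood : O k ⊆ U ∨ Disjoint (O k) C
      · have hzk : z ∉ S k t := fun hzk => hk.not_ge (hi.2 ⟨hkgood, hzk⟩)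
        filter_upwards [(hsep k (hk.le.trans hij)).mem_nhds_compl hzk] with w hw hwk
        exact hw hwk.2
      · exact .of_forall fun w hwk => hkgood hwk.1
    filter_upwards [hSi, hlt] with w hwi hw
    exact ⟨⟨hi.1.1, hwi⟩, fun k hk => not_lt.1 fun hki => hw k hki hk⟩
  by_cases hiU : O i ⊆ U
  · exact .inl ⟨hiU hzi, hleast.mono fun w hw => ⟨i, hw, hiU⟩⟩
  · exact .inr ⟨disjoint_left.1 (hi.1.1.resolve_left hiU) hzi,
      hleast.mono fun w hw ⟨k, hk, hkU⟩ => hiU (hw.unique hk ▸ hkU)⟩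

end Separation

/-- An open set `V` lies between `C` and `U` if `C ⊆ V` and `closure V ⊆ U`. -/
structure IsBetween {X : Type*} [TopologicalSpace X] (C U V : Set X) : Prop where
  isOpen : IsOpen V
  subset : C ⊆ V
  closure_subset : closure V ⊆ U

/-- Any two pairs of disjoint closed sets, given here as a closed set inside an open one, have
partitions with disjoint frontiers. For normal spaces this says that the covering dimension is at
most one, by the theorem of Eilenberg and Otto. -/
def HasDisjointPartitions (X : Type*) [TopologicalSpace X] : Prop :=
  ∀ ⦃C U C' U' : Set X⦄, IsClosed C → IsOpen U → C ⊆ U → IsClosed C' → IsOpen U' → C' ⊆ U' →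
    ∃ V V', IsBetween C U V ∧ IsBetween C' U' V' ∧ Disjoint (frontier V) (frontier V')

section Partitions

variable {X : Type*} [TopologicalSpace X]

lemma exists_continuous_forall_ge [T2Space X] [ParacompactSpace X]
    {p : ℕ → X → Prop} (hp : ∀ x, ∀ᶠ q in atTop ×ˢ 𝓝 x, p q.1 q.2) :
    ∃ f : C(X, ℝ), ∀ x (t : ℕ), f x ≤ t → p t x := by
  obtain ⟨f, hf⟩ := exists_continuous_forall_mem_convex_of_local_const
    (t := fun x => {a : ℝ | ∀ t : ℕ, a ≤ t → p t x})
    (fun x => OrdConnected.convex ⟨fun a ha b _ c hc t hct => ha t (hc.1.trans hct)⟩) fun x => by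
      obtain ⟨T, hT, N, hN, h⟩ := eventually_prod_iff.1 (hp x)
      obtain ⟨n, hn⟩ := eventually_atTop.1 hT
      exact ⟨n, hN.mono fun z hz t hnt => h (hn t (Nat.cast_le.1 hnt)) hz⟩
  exact ⟨f, hf⟩

lemma eventually_natCeil_eq {a : ℝ} (ha : a ∉ range ((↑) : ℤ → ℝ)) :
    ∀ᶠ b in 𝓝 a, ⌈b⌉₊ = ⌈a⌉₊ := by
  have ha_mem : a ∈ Ioo ((⌈a⌉ : ℝ) - 1) ⌈a⌉ :=
    ⟨by linarith [Int.ceil_lt_add_one a], (Int.le_ceil a).lt_of_ne fun h => ha ⟨_, h.symm⟩⟩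
  filter_upwards [Ioo_mem_nhds ha_mem.1 ha_mem.2] with b hb
  rw [← Int.ceil_toNat, ← Int.ceil_toNat, Int.ceil_eq_iff.2 ⟨hb.1, hb.2.le⟩]

/-- The set `S ⌈f x⌉₊` is locally independent of `x` off the integer levels of `f`. -/
lemma exists_isBetween_frontier_subset {C K O U : Set X} (hCK : C ⊆ interior K)
    (hOU : closure O ⊆ U) {S : ℕ → Set X} {f : X → ℝ} (hf : Continuous f)
    (hS : ∀ x (t : ℕ), f x ≤ t → SeparatesAt K O (S t) x) :
    ∃ V, IsBetween C U V ∧ frontier V ⊆ f ⁻¹' range ((↑) : ℤ → ℝ) := by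
  let V : Set X := {x | x ∈ S ⌈f x⌉₊}
  have hsep (x : X) : SeparatesAt K O (S ⌈f x⌉₊) x := hS x _ (Nat.le_ceil _)
  have hKV : K ⊆ V := fun x => (hsep x).mem_of_mem
  have hVO : V ⊆ O := fun x hx => ((hsep x).mem_and_mem_nhds hx).1
  have hV (x : X) (hx : f x ∉ range ((↑) : ℤ → ℝ)) : x ∉ frontier V := by
    have hceil := hf.continuousAt.eventually (eventually_natCeil_eq hx)
    rw [frontier_eq_inter_compl_interior, mem_inter_iff, mem_compl_iff, mem_compl_iff,
      mem_interior_iff_mem_nhds, mem_interior_iff_mem_nhds]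
    rintro ⟨hV, hVc⟩
    by_cases hxV : x ∈ V
    · refine hV ?_
      filter_upwards [hceil, ((hsep x).mem_and_mem_nhds hxV).2] with z hzf hz
      change z ∈ S ⌈f z⌉₊
      rwa [hzf]
    · refine hVc ?_
      filter_upwards [hceil, (hsep x).mem_nhds_compl hxV] with z hzf hz
      exact fun hzV => hz (hzf ▸ hzV)
  exact ⟨interior V, ⟨isOpen_interior, hCK.trans (interior_mono hKV),
    (closure_mono (interior_subset.trans hVO)).trans hOU⟩,
    frontier_interior_subset.trans fun x hx => not_not.1 (mt (hV x) (not_not.2 hx))⟩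

lemma HasDisjointPartitions.of_eventuallySeparated [T2Space X] [ParacompactSpace X]
    (h : ∀ C U : Set X, IsClosed C → IsOpen U → C ⊆ U → EventuallySeparated C U) :
    HasDisjointPartitions X := by
  intro C U C' U' hC hU hCU hC' hU' hCU'
  obtain ⟨O, hO, hCO, hOU⟩ := normal_exists_closure_subset hC hU hCU
  obtain ⟨W, hW, hCW, hWO⟩ := normal_exists_closure_subset hC hO hCO
  obtain ⟨O', hO', hCO', hOU'⟩ := normal_exists_closure_subset hC' hU' hCU'
  obtain ⟨W', hW', hCW', hWO'⟩ := normal_exists_closure_subset hC' hO' hCO'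
  obtain ⟨S, hS⟩ := h (closure W) O isClosed_closure hO hWO
  obtain ⟨S', hS'⟩ := h (closure W') O' isClosed_closure hO' hWO'
  obtain ⟨f, hf⟩ := exists_continuous_forall_ge
    (p := fun t x => SeparatesAt (closure W) O (S t) x ∧ SeparatesAt (closure W') O' (S' t) x)
    fun x => (hS x).and (hS' x)
  obtain ⟨V, hV, hV_frontier⟩ := exists_isBetween_frontier_subset
    (hCW.trans hW.subset_interior_closure) hOU f.continuous fun x t hxt => (hf x t hxt).1
  obtain ⟨V', hV', hV'_frontier⟩ := exists_isBetween_frontier_subset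
    (hCW'.trans hW'.subset_interior_closure) hOU' (f := fun x => f x + 1 / 2) (by fun_prop)
    fun x t hxt => (hf x t (by linarith)).2
  refine ⟨V, V', hV, hV', disjoint_left.2 fun x hx hx' => ?_⟩
  obtain ⟨m, hm⟩ := hV_frontier hx
  obtain ⟨n, hn⟩ : ∃ n : ℤ, (n : ℝ) = f x + 1 / 2 := hV'_frontier hx'
  have : (2 * n : ℝ) = 2 * m + 1 := by linarith
  norm_cast at this
  omega

end Partitions

section Refinement

variable {X : Type*} [TopologicalSpace X]

lemma HasDisjointPartitions.exists_refinement [NormalSpace X] (h : HasDisjointPartitions X)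
    {C U C' U' : Set X} (hC : IsClosed C) (hU : IsOpen U) (hCU : C ⊆ U)
    (hC' : IsClosed C') (hU' : IsOpen U') (hCU' : C' ⊆ U') :
    ∃ C₁ U₁ V', IsClosed C₁ ∧ IsOpen U₁ ∧ C₁ ⊆ U₁ ∧ C ⊆ interior C₁ ∧ closure U₁ ⊆ U ∧
      IsBetween C' U' V' ∧ Disjoint (U₁ \ C₁) (frontier V') := by
  obtain ⟨V, V', hV, hV', hVV'⟩ := h hC hU hCU hC' hU' hCU'
  have hfrontier : frontier V ⊆ (frontier V')ᶜ ∩ (U \ C) := fun x hx =>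
    ⟨disjoint_left.1 hVV' hx, hV.closure_subset hx.1,
      fun hxC => hx.2 (hV.isOpen.interior_eq.symm ▸ hV.subset hxC)⟩
  obtain ⟨W, hW, hVW, hW_closure⟩ := normal_exists_closure_subset isClosed_frontier
    (isClosed_frontier.isOpen_compl.inter (hU.sdiff hC)) hfrontier
  have hclosureV : closure V ⊆ V ∪ W := by
    rw [closure_eq_self_union_frontier]
    exact union_subset_union_right V hVW
  refine ⟨closure V \ W, V ∪ W, V', isClosed_closure.sdiff hW, hV.isOpen.union hW,
    sdiff_subset.trans hclosureV, ?_, ?_, hV', ?_⟩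
  · have hCV : C ⊆ V \ closure W := fun x hx =>
      ⟨hV.subset hx, fun hxW => (hW_closure hxW).2.2 hx⟩
    exact hCV.trans (interior_maximal (sdiff_subset_sdiff subset_closure subset_closure)
      (hV.isOpen.sdiff isClosed_closure))
  · rw [closure_union]
    exact union_subset hV.closure_subset fun x hx => (hW_closure hx).2.1
  · refine disjoint_left.2 fun x hx => (hW_closure (subset_closure ?_)).1
    by_contra hxW
    exact hx.2 ⟨subset_closure (hx.1.resolve_right hxW), hxW⟩

lemma HasDisjointPartitions.exists_isBetween_seq [NormalSpace X] (h : HasDisjointPartitions X)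
    {C U : Set X} (hC : IsClosed C) (hU : IsOpen U) (hCU : C ⊆ U) {C' U' : ℕ → Set X}
    (hC' : ∀ m, IsClosed (C' m)) (hU' : ∀ m, IsOpen (U' m)) (hCU' : ∀ m, C' m ⊆ U' m) :
    ∃ V, IsBetween C U V ∧
      ∀ m, ∃ V', IsBetween (C' m) (U' m) V' ∧ Disjoint (frontier V) (frontier V') := by
  choose! K O V' hK hO hKO hCK hOU hV' hdisjoint using fun (p : Set X × Set X)
    (hp : IsClosed p.1 ∧ IsOpen p.2 ∧ p.1 ⊆ p.2) m =>
      h.exists_refinement hp.1 hp.2.1 hp.2.2 (hC' m) (hU' m) (hCU' m)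
  let P : ℕ → Set X × Set X := fun m => Nat.rec (C, U) (fun m p => (K p m, O p m)) m
  have hP (m) : IsClosed (P m).1 ∧ IsOpen (P m).2 ∧ (P m).1 ⊆ (P m).2 := by
    induction m with
    | zero => exact ⟨hC, hU, hCU⟩
    | succ m ih => exact ⟨hK _ ih m, hO _ ih m, hKO _ ih m⟩
  have hinterior (m) : (P m).1 ⊆ interior (P (m + 1)).1 := hCK _ (hP m) m
  have hclosure (m) : closure (P (m + 1)).2 ⊆ (P m).2 := hOU _ (hP m) m
  have hmono : Monotone fun m => (P m).1 :=
    monotone_nat_of_le_succ fun m => (hinterior m).trans interior_subset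
  have hanti : Antitone fun m => (P m).2 :=
    antitone_nat_of_succ_le fun m => subset_closure.trans (hclosure m)
  let V : Set X := ⋃ m, (P m).1
  have hV_open : IsOpen V := isOpen_iff_mem_nhds.2 fun x hx => by
    obtain ⟨m, hm⟩ := mem_iUnion.1 hx
    exact mem_of_superset (mem_interior_iff_mem_nhds.1 (hinterior m hm))
      (subset_iUnion (fun m => (P m).1) (m + 1))
  have hV_closure (m) : closure V ⊆ (P m).2 :=
    (closure_mono (iUnion_subset fun n => (hmono (le_max_left n (m + 1))).trans
      ((hP _).2.2.trans (hanti (le_max_right n (m + 1)))))).trans (hclosure m)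
  have hV_frontier (m) : frontier V ⊆ (P m).2 \ (P m).1 := fun x hx =>
    ⟨hV_closure m hx.1, fun hxP => hx.2 (hV_open.interior_eq.symm ▸ mem_iUnion.2 ⟨m, hxP⟩)⟩
  exact ⟨V, ⟨hV_open, subset_iUnion (fun m => (P m).1) 0, hV_closure 0⟩, fun m =>
    ⟨_, hV' _ (hP m) m, (hdisjoint _ (hP m) m).mono_left (hV_frontier (m + 1))⟩⟩

/-- A sequence of closed sets `K j` inside open sets `O j` such that every neighbourhood of `x`
contains some `O j` for which `K j` is a neighbourhood of `x`. -/
structure IsNestedBasis (K O : ℕ → Set X) : Prop where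
  isClosed : ∀ j, IsClosed (K j)
  isOpen : ∀ j, IsOpen (O j)
  subset : ∀ j, K j ⊆ O j
  exists_subset : ∀ x, ∀ N ∈ 𝓝 x, ∃ j, K j ∈ 𝓝 x ∧ O j ⊆ N

lemma exists_isNestedBasis (X : Type*) [TopologicalSpace X] [RegularSpace X]
    [SecondCountableTopology X] : ∃ K O : ℕ → Set X, IsNestedBasis K O := by
  have hB := isBasis_countableBasis X
  let Q : Set (Set X × Set X) := {p ∈ countableBasis X ×ˢ countableBasis X | closure p.1 ⊆ p.2}
  have hQ : Q.Countable := ((countable_countableBasis X).prod (countable_countableBasis X)).mono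
    (sep_subset _ _)
  obtain ⟨p, hp⟩ := (hQ.insert (∅, ∅)).exists_eq_range (insert_nonempty _ _)
  have hp_mem (j) : p j = (∅, ∅) ∨ p j ∈ Q := by
    rw [← mem_insert_iff, hp]
    exact mem_range_self j
  refine ⟨fun j => closure (p j).1, fun j => (p j).2, fun _ => isClosed_closure, fun j => ?_,
    fun j => ?_, fun x N hN => ?_⟩
  · rcases hp_mem j with hj | hj
    · simp only [hj, isOpen_empty]
    · exact hB.isOpen hj.1.2
  · rcases hp_mem j with hj | hj
    · simp only [hj, closure_empty, subset_rfl]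
    · exact hj.2
  · obtain ⟨O, hO, hxO, hON⟩ := hB.mem_nhds_iff.1 hN
    obtain ⟨K, hK, hxK, hKO⟩ := hB.exists_closure_subset ((hB.isOpen hO).mem_nhds hxO)
    obtain ⟨j, hj⟩ : (K, O) ∈ range p := hp ▸ mem_insert_of_mem _ ⟨⟨hK, hO⟩, hKO⟩
    refine ⟨j, ?_, ?_⟩
    · rw [hj]
      exact mem_of_superset ((hB.isOpen hK).mem_nhds hxK) subset_closure
    · rwa [hj]

lemma IsNestedBasis.hasSmallInductiveDimensionLE_zero {K O : ℕ → Set X} (hKO : IsNestedBasis K O)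
    {A : Set X} (h : ∀ j, ∃ V, IsBetween (K j) (O j) V ∧ Disjoint (frontier V) A) :
    HasSmallInductiveDimensionLE A 0 := by
  refine hasSmallInductiveDimensionLE_zero_of_frontier_disjoint fun x _ N hN => ?_
  obtain ⟨j, hjx, hjN⟩ := hKO.exists_subset x N hN
  obtain ⟨V, hV, hVA⟩ := h j
  exact ⟨V, (subset_closure.trans hV.closure_subset).trans hjN, hV.isOpen,
    hV.subset (mem_of_mem_nhds hjx), hVA⟩

theorem HasDisjointPartitions.countableDimensional [RegularSpace X]
    [SecondCountableTopology X] (h : HasDisjointPartitions X) : CountableDimensional X := by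
  obtain ⟨K, O, hKO⟩ := exists_isNestedBasis X
  choose V hV hV_disjoint using fun j => h.exists_isBetween_seq (hKO.isClosed j) (hKO.isOpen j)
    (hKO.subset j) hKO.isClosed hKO.isOpen hKO.subset
  refine .of_iUnion (ι := Option ℕ)
    (A := fun o => o.elim (⋃ j, frontier (V j))ᶜ fun j => frontier (V j)) ?_ ?_
  · rw [iUnion_option]
    exact compl_union_self _
  · rintro (_ | j)
    · exact hKO.hasSmallInductiveDimensionLE_zero fun i => ⟨V i, hV i,
        disjoint_compl_right_iff_subset.2 (subset_iUnion (fun j => frontier (V j)) i)⟩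
    · refine hKO.hasSmallInductiveDimensionLE_zero fun i => ?_
      obtain ⟨V', hV', hdisjoint⟩ := hV_disjoint j i
      exact ⟨V', hV', hdisjoint.symm⟩

end Refinement

section NestedBasis

variable {X : Type*} [TopologicalSpace X] {K O : ℕ → Set X}

lemma IsNestedBasis.preimage (hKO : IsNestedBasis K O) {Y : Type*} [TopologicalSpace Y]
    {f : Y → X} (hf : IsInducing f) :
    IsNestedBasis (fun j => f ⁻¹' K j) (fun j => f ⁻¹' O j) where
  isClosed j := (hKO.isClosed j).preimage hf.continuous
  isOpen j := (hKO.isOpen j).preimage hf.continuous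
  subset j := preimage_mono (hKO.subset j)
  exists_subset y N hN := by
    obtain ⟨M, hM, hMN⟩ := mem_comap.1 (hf.nhds_eq_comap y ▸ hN)
    obtain ⟨j, hj, hjM⟩ := hKO.exists_subset (f y) M hM
    exact ⟨j, hf.continuous.continuousAt hj, (preimage_mono hjM).trans hMN⟩

lemma IsNestedBasis.eventuallySeparated (hKO : IsNestedBasis K O)
    (h : ∀ j, EventuallySeparated (K j) (O j)) {C U : Set X} (hC : IsClosed C) (hU : IsOpen U)
    (hCU : C ⊆ U) : EventuallySeparated C U := by
  refine .of_forall_exists_mem_nhds h fun x => ?_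
  by_cases hx : x ∈ U
  · obtain ⟨j, hj, hjU⟩ := hKO.exists_subset x U (hU.mem_nhds hx)
    exact ⟨j, hj, .inl hjU⟩
  · obtain ⟨j, hj, hjC⟩ := hKO.exists_subset x Cᶜ (hC.isOpen_compl.mem_nhds (mt (@hCU x) hx))
    exact ⟨j, hj, .inr (disjoint_left.2 hjC)⟩

lemma exists_continuousMap_isNestedBasis (X : Type*) [TopologicalSpace X] [RegularSpace X]
    [SecondCountableTopology X] :
    ∃ u : ℕ → C(X, ℝ), IsNestedBasis (fun j => {x | u j x ≤ 0}) (fun j => {x | u j x < 1}) := by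
  obtain ⟨K, O, hKO⟩ := exists_isNestedBasis X
  choose u hu₀ hu₁ _ using fun j => exists_continuous_zero_one_of_isClosed (hKO.isClosed j)
    (hKO.isOpen j).isClosed_compl (disjoint_compl_right_iff_subset.2 (hKO.subset j))
  refine ⟨u, fun j => isClosed_le (u j).continuous continuous_const,
    fun j => isOpen_lt (u j).continuous continuous_const,
    fun j x hx => (show u j x ≤ 0 from hx).trans_lt one_pos, fun x N hN => ?_⟩
  obtain ⟨j, hj, hjN⟩ := hKO.exists_subset x N hN
  refine ⟨j, mem_of_superset hj fun z hz => (hu₀ j hz).le, fun z hz => hjN ?_⟩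
  by_contra hzO
  exact ne_of_lt hz (hu₁ j hzO)

end NestedBasis

lemma countableDimensional_of_forall_exists_mem_graph {X Z : Type*} [TopologicalSpace X]
    [MetrizableSpace X] [SecondCountableTopology X] [TopologicalSpace Z]
    [SecondCountableTopology Z] [HasSmallInductiveDimensionLE Z 0] {g : X → Z} (hg : Continuous g)
    {u : ℕ → C(X, ℝ)} (hu : IsNestedBasis (fun j => {x | u j x ≤ 0}) (fun j => {x | u j x < 1}))
    {h : ℕ → PartialContMap Z ℝ} (hgu : ∀ x j, ∃ e, (g x, u j x) ∈ (h e).graph) :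
    CountableDimensional X := by
  obtain ⟨r, hr, hr_mem, hr_ne⟩ := exists_continuous_eventually_ne_graph h
  have hsep (j) : EventuallySeparated {x | u j x ≤ 0} {x | u j x < 1} := by
    refine eventuallySeparated_of_eventually_ne (ρ := fun t x => r t (g x)) (u j).continuous
      (fun t => (hr t).comp hg) (fun t x => hr_mem t (g x)) fun x => ?_
    obtain ⟨e, he⟩ := hgu x j
    exact (tendsto_id.prodMap (hg.prodMk (u j).continuous).continuousAt).eventually (hr_ne e _ he)
  let _ := metrizableSpaceMetric X
  exact (HasDisjointPartitions.of_eventuallySeparated fun C U hC hU hCU =>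
    hu.eventuallySeparated hsep hC hU hCU).countableDimensional

theorem countableDimensional_of_not_zeroAvoiding {X : Type*} [TopologicalSpace X]
    [MetrizableSpace X] [SecondCountableTopology X] (hX : ¬ ZeroAvoiding X) :
    CountableDimensional X := by
  obtain ⟨u, hu⟩ := exists_continuousMap_isNestedBasis X
  obtain ⟨G, hG, H, hH, hGH⟩ := not_avoids_iff.1 fun hF => hX
    ⟨range fun j => ofContinuousMap (u j), countable_range _, hF⟩
  have : Nonempty (PartialContMap ℝ ℝ) := ⟨ofContinuousMap 0⟩
  obtain ⟨h, hh⟩ := countable_iff_exists_subset_range.1 hH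
  obtain ⟨Z, hZ, hZ₀⟩ := countableDimensional_real.exists_iUnion
  have : Countable G := hG
  refine .of_iUnion_countableDimensional (ι := G × ℕ)
    (A := fun p => {x | ∃ hx : x ∈ p.1.1.dom, p.1.1.toFun ⟨x, hx⟩ ∈ Z p.2 ∧
      ∀ j, ∃ e, (p.1.1.toFun ⟨x, hx⟩, u j x) ∈ (h e).graph}) ?_ fun ⟨⟨g, _⟩, n⟩ => ?_
  · refine iUnion_eq_univ_iff.2 fun x => ?_
    obtain ⟨g, hg, y, hxy, hy⟩ := hGH x
    obtain ⟨hx, rfl⟩ := mem_graph.1 hxy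
    obtain ⟨n, hn⟩ := iUnion_eq_univ_iff.1 hZ (g.toFun ⟨x, hx⟩)
    refine ⟨(⟨g, hg⟩, n), hx, hn, fun j => ?_⟩
    obtain ⟨f, hf, hf_graph⟩ := hy _ ⟨j, rfl⟩ _ (mem_graph_ofContinuousMap.2 rfl)
    obtain ⟨e, rfl⟩ := hh hf
    exact ⟨e, hf_graph⟩
  · have := hZ₀ n
    refine countableDimensional_of_forall_exists_mem_graph (Z := Z n)
      (g := fun x => ⟨g.toFun ⟨x, x.2.fst⟩, x.2.snd.1⟩)
      (u := fun j => (u j).restrict _)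
      (h := fun e => (h e).comp (ofContinuousMap ⟨Subtype.val, continuous_subtype_val⟩))
      ((g.cont.comp (continuous_subtype_val.subtype_mk _)).subtype_mk _)
      (hu.preimage IsInducing.subtypeVal) fun x j => ?_
    obtain ⟨e, he⟩ := x.2.snd.2 j
    exact ⟨e, mem_graph_comp.2 ⟨_, mem_graph_ofContinuousMap.2 rfl, he⟩⟩

/-- A separable metrizable space is countable dimensional iff it is not 0-avoiding. -/
theorem stmt14 (X : Type*) [TopologicalSpace X] [TopologicalSpace.MetrizableSpace X]
    [TopologicalSpace.SeparableSpace X] :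
    CountableDimensional X ↔ ¬ ZeroAvoiding X := by
  have : SecondCountableTopology X := by
    let _ := metrizableSpaceMetric X
    exact UniformSpace.secondCountable_of_separable X
  exact ⟨CountableDimensional.not_zeroAvoiding, countableDimensional_of_not_zeroAvoiding⟩
end

section
/- There exists a sequence (X_i)_{i ∈ ℕ} of totally disconnected subspaces of the Hilbert cube [0,1]^ℕ such that, setting Y = [0,1]^ℕ \ ⋃_i X_i: (i) every compact subspace of Y is totally disconnected (equivalently, zero-dimensional, since compact metrizable totally disconnected spaces are zero-dimensional); and (ii) Y does not topologically embed into ℝ^N for any N ∈ ℕ (i.e., Y is infinite dimensional). -/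
open Set

/-
Two transfinite choices of length `𝔠` are made at once. For every coordinate `i`, distribute
continuum many private values of that coordinate to each Borel set with a large `i`-th projection,
and pick in each such set a point having one of its private values; these points form `X i`. So
`X i` projects injectively to the `i`-th coordinate, and keeping only irrational values makes it
totally disconnected, while a nondegenerate continuum has a large projection and meets some `X i`.
Picking the points injectively, together with a point of each Borel set of cardinality at least
`𝔠` that is kept out of every `X i`, prevents `⋃ i, X i` from containing a closed set of
cardinality `𝔠`.

If the complement `Y` embedded into `ℝ ^ N`, it would be covered by `N + 1` zero-dimensional sets:
take `N + 1` disjoint dense sets `D j` of reals and the points whose image has no coordinate in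
`D j`. A zero-dimensional set is missed by some partition between any two opposite faces of the
cube, so `N + 1` partitions in distinct directions would have an intersection disjoint from `Y`. By
the Poincaré–Miranda theorem this closed set projects onto every further coordinate, hence it is a
closed subset of `⋃ i, X i` of cardinality `𝔠`.

The Poincaré–Miranda theorem comes from a mod 2 version of Stokes' theorem on a grid: the cup
product of the differentials of the indicators of the far sides of the partitions has total mass
`1`, so it is nonzero on some small cube, and that cube meets both sides of every partition.
-/

open TopologicalSpace Topology

open scoped Cardinal

/-! ### Cubical cochains modulo two -/

theorem sum_sum_erase_eq_zero_of_charTwo {ι R : Type*} [DecidableEq ι] [Ring R] [CharP R 2]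
    (S : Finset ι) {g : ι → ι → R} (hg : ∀ i j, g i j = g j i) :
    ∑ i ∈ S, ∑ j ∈ S.erase i, g i j = 0 := by
  rw [Finset.sum_sigma']
  refine Finset.sum_involution (fun a _ => ⟨a.2, a.1⟩) ?_ ?_ ?_ fun _ _ => rfl
  · rintro ⟨i, j⟩ -
    exact (congrArg (g i j + ·) (hg j i)).trans (CharTwo.add_self_eq_zero _)
  · rintro ⟨i, j⟩ hij - h
    exact (Finset.mem_erase.mp (Finset.mem_sigma.mp hij).2).1 (congrArg Sigma.fst h)
  · rintro ⟨i, j⟩ hij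
    simp only [Finset.mem_sigma, Finset.mem_erase] at hij ⊢
    exact ⟨hij.2.2, hij.2.1.symm, hij.1⟩

/-- Cubical cochains on the grid `ι → ℕ` with coefficients in `R`: the value at `S`, `u` is the
value on the cube with lowest vertex `u` and edge directions `S`. Orientations are not recorded, so
that coboundaries are only meaningful in characteristic two. -/
abbrev CubicalCochain (ι R : Type*) := Finset ι → (ι → ℕ) → R

namespace CubicalCochain

variable {ι R : Type*} [DecidableEq ι]

section Ring

variable [Ring R]

/-- The coboundary: the sum over the pairs of opposite facets of a cube, without orientation
signs. -/
def coboundary (c : CubicalCochain ι R) : CubicalCochain ι R := fun S u =>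
  ∑ i ∈ S, (c (S.erase i) (u + Pi.single i 1) - c (S.erase i) u)

theorem coboundary_coboundary [CharP R 2] (c : CubicalCochain ι R) :
    coboundary (coboundary c) = 0 := by
  ext S u
  simp only [coboundary, ← Finset.sum_sub_distrib]
  refine sum_sum_erase_eq_zero_of_charTwo S fun i j => ?_
  rw [Finset.erase_right_comm, add_right_comm]
  abel

/-- The cup product `df₁ ∪ ⋯ ∪ dfₙ` of the differentials of a list of functions: on a cube of
dimension `n` it is the sum, over the monotone edge paths from the lowest to the highest vertex, of
the product of the increments of `fᵣ` along the `r`-th edge. -/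
def cup : List ((ι → ℕ) → R) → CubicalCochain ι R
  | [], _, _ => 1
  | f :: fs, S, u =>
    ∑ i ∈ S, (f (u + Pi.single i 1) - f u) * cup fs (S.erase i) (u + Pi.single i 1)

theorem coboundary_mul (f : (ι → ℕ) → R) (fs : List ((ι → ℕ) → R)) (S : Finset ι) (u : ι → ℕ) :
    coboundary (fun T v => f v * cup fs T v) S u =
      cup (f :: fs) S u + f u * coboundary (cup fs) S u := by
  simp only [coboundary, cup, Finset.mul_sum, ← Finset.sum_add_distrib]
  exact Finset.sum_congr rfl fun i _ => by noncomm_ring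

theorem cup_cons_eq_coboundary (f : (ι → ℕ) → R) {fs : List ((ι → ℕ) → R)}
    (h : coboundary (cup fs) = 0) : cup (f :: fs) = coboundary fun T v => f v * cup fs T v := by
  ext S u
  rw [coboundary_mul, h, Pi.zero_apply, Pi.zero_apply, mul_zero, add_zero]

theorem coboundary_cup [CharP R 2] (fs : List ((ι → ℕ) → R)) : coboundary (cup fs) = 0 := by
  induction fs with
  | nil =>
    ext S u
    exact Finset.sum_eq_zero fun i _ => sub_self 1
  | cons f fs ih => rw [cup_cons_eq_coboundary f ih, coboundary_coboundary]

theorem exists_ne_of_cup_ne_zero {fs : List ((ι → ℕ) → R)} {S : Finset ι} {u : ι → ℕ}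
    (h : cup fs S u ≠ 0) {f : (ι → ℕ) → R} (hf : f ∈ fs) :
    ∃ a ∈ Icc u (u + ∑ i ∈ S, Pi.single i 1), ∃ b ∈ Icc u (u + ∑ i ∈ S, Pi.single i 1),
      f a ≠ f b := by
  induction fs generalizing S u with
  | nil => exact absurd hf List.not_mem_nil
  | cons g gs ih =>
    obtain ⟨i, hi, hne⟩ := Finset.exists_ne_zero_of_sum_ne_zero h
    have top_eq : u + Pi.single i 1 + ∑ j ∈ S.erase i, Pi.single j 1 =
        u + ∑ j ∈ S, (Pi.single j 1 : ι → ℕ) := by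
      rw [add_assoc, Finset.add_sum_erase S (fun j => (Pi.single j 1 : ι → ℕ)) hi]
    have hsub : Icc (u + Pi.single i 1) (u + Pi.single i 1 + ∑ j ∈ S.erase i, Pi.single j 1) ⊆
        Icc u (u + ∑ j ∈ S, Pi.single j 1) := by
      rw [top_eq]
      exact Icc_subset_Icc_left le_self_add
    rcases List.mem_cons.mp hf with rfl | hf
    · exact ⟨_, hsub (left_mem_Icc.mpr le_self_add), u, left_mem_Icc.mpr le_self_add,
        sub_ne_zero.mp (left_ne_zero_of_mul hne)⟩
    · obtain ⟨a, ha, b, hb, hab⟩ := ih (right_ne_zero_of_mul hne) hf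
      exact ⟨a, hsub ha, b, hsub hb, hab⟩

theorem cup_eq_zero_of_notMem {fs : List ((ι → ℕ) → R)} {f : (ι → ℕ) → R} (hf : f ∈ fs) {i : ι}
    {S : Finset ι} (hi : i ∉ S) {u : ι → ℕ} (hu : ∀ v, v i = u i → f v = f u) :
    cup fs S u = 0 := by
  by_contra h
  obtain ⟨a, ha, b, hb, hab⟩ := exists_ne_of_cup_ne_zero h hf
  have coord_eq : ∀ v ∈ Icc u (u + ∑ j ∈ S, Pi.single j 1), v i = u i := fun v hv => by
    have htop : (∑ j ∈ S, Pi.single j 1 : ι → ℕ) i = 0 := by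
      rw [Finset.sum_apply]
      exact Finset.sum_eq_zero fun j hj => Pi.single_eq_of_ne (ne_of_mem_of_not_mem hj hi).symm 1
    exact le_antisymm ((hv.2 i).trans_eq (by rw [Pi.add_apply, htop, add_zero])) (hv.1 i)
  exact hab ((hu a (coord_eq a ha)).trans (hu b (coord_eq b hb)).symm)

end Ring

section BoxSum

variable {M : Type*}

/-- The sum of `F` over the grid points whose coordinates in `l` range over `0, …, m - 1` and
whose other coordinates agree with `w`. -/
def boxSum [AddCommMonoid M] (m : ℕ) : List ι → ((ι → ℕ) → M) → (ι → ℕ) → M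
  | [], F, w => F w
  | i :: l, F, w => ∑ a ∈ Finset.range m, boxSum m l F (Function.update w i a)

theorem boxSum_sum [AddCommMonoid M] (m : ℕ) (l : List ι) {κ : Type*} (S : Finset κ)
    (F : κ → (ι → ℕ) → M) (w : ι → ℕ) :
    boxSum m l (fun u => ∑ i ∈ S, F i u) w = ∑ i ∈ S, boxSum m l (F i) w := by
  induction l generalizing w with
  | nil => rfl
  | cons i l ih =>
    simp only [boxSum, ih]
    exact Finset.sum_comm

theorem boxSum_sub [AddCommGroup M] (m : ℕ) (l : List ι) (F G : (ι → ℕ) → M) (w : ι → ℕ) :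
    boxSum m l (fun u => F u - G u) w = boxSum m l F w - boxSum m l G w := by
  induction l generalizing w with
  | nil => rfl
  | cons i l ih => simp only [boxSum, ih, Finset.sum_sub_distrib]

theorem boxSum_congr [AddCommMonoid M] (m : ℕ) {l : List ι} {F G : (ι → ℕ) → M} {w : ι → ℕ}
    (h : ∀ u, (∀ i ∉ l, u i = w i) → F u = G u) : boxSum m l F w = boxSum m l G w := by
  induction l generalizing w with
  | nil => exact h w fun _ _ => rfl
  | cons j l ih =>
    refine Finset.sum_congr rfl fun a _ => ih fun u hu => h u fun i hi => ?_
    rw [List.mem_cons, not_or] at hi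
    rw [hu i hi.2, Function.update_of_ne hi.1]

theorem boxSum_zero [AddCommMonoid M] (m : ℕ) (l : List ι) (w : ι → ℕ) :
    boxSum m l (fun _ => (0 : M)) w = 0 := by
  induction l generalizing w with
  | nil => rfl
  | cons j l ih => simp only [boxSum, ih, Finset.sum_const_zero]

theorem boxSum_add_single [AddCommMonoid M] (m : ℕ) {l : List ι} {i : ι} (hi : i ∉ l)
    (F : (ι → ℕ) → M) (w : ι → ℕ) :
    boxSum m l (fun u => F (u + Pi.single i 1)) w = boxSum m l F (w + Pi.single i 1) := by
  induction l generalizing w with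
  | nil => rfl
  | cons j l ih =>
    rw [List.mem_cons, not_or] at hi
    refine Finset.sum_congr rfl fun a _ => ?_
    rw [ih hi.2]
    congr 1
    ext k
    rcases eq_or_ne k j with rfl | hkj
    · simp [Ne.symm hi.1]
    · simp [hkj]

theorem boxSum_telescope [AddCommGroup M] (m : ℕ) {l : List ι} (hl : l.Nodup) {i : ι} (hi : i ∈ l)
    (F : (ι → ℕ) → M) (w : ι → ℕ) :
    boxSum m l (fun u => F (u + Pi.single i 1) - F u) w =
      boxSum m (l.erase i) F (Function.update w i m) -
        boxSum m (l.erase i) F (Function.update w i 0) := by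
  induction l generalizing w with
  | nil => exact absurd hi List.not_mem_nil
  | cons j l ih =>
    rw [List.nodup_cons] at hl
    rcases eq_or_ne i j with rfl | hij
    · have shift_update (a : ℕ) :
          Function.update w i a + Pi.single i 1 = Function.update w i (a + 1) := by
        ext k
        rcases eq_or_ne k i with rfl | hk <;> simp [*]
      simp only [boxSum, List.erase_cons_head, boxSum_sub, boxSum_add_single m hl.1, shift_update]
      exact Finset.sum_range_sub (fun a => boxSum m l F (Function.update w i a)) m
    · rw [List.erase_cons_tail (by simpa using hij.symm)]
      simp only [boxSum, ih hl.2 ((List.mem_cons.mp hi).resolve_left hij), Finset.sum_sub_distrib,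
        Function.update_comm hij]

theorem exists_ne_zero_of_boxSum_ne_zero [AddCommMonoid M] {m : ℕ} {l : List ι} {F : (ι → ℕ) → M}
    {w : ι → ℕ} (h : boxSum m l F w ≠ 0) :
    ∃ u, (∀ i ∈ l, u i < m) ∧ (∀ i ∉ l, u i = w i) ∧ F u ≠ 0 := by
  induction l generalizing w with
  | nil => exact ⟨w, by simp, fun _ _ => rfl, h⟩
  | cons j l ih =>
    obtain ⟨a, ha, hne⟩ := Finset.exists_ne_zero_of_sum_ne_zero h
    obtain ⟨u, hlt, heq, hu⟩ := ih hne
    refine ⟨u, fun i hi => ?_, fun i hi => ?_, hu⟩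
    · by_cases hil : i ∈ l
      · exact hlt i hil
      · obtain rfl := (List.mem_cons.mp hi).resolve_right hil
        simpa [heq i hil] using ha
    · rw [List.mem_cons, not_or] at hi
      rw [heq i hi.2, Function.update_of_ne hi.1]

end BoxSum

variable [Ring R]

theorem boxSum_coboundary (m : ℕ) {l : List ι} (hl : l.Nodup) (c : CubicalCochain ι R)
    (w : ι → ℕ) :
    boxSum m l (coboundary c l.toFinset) w = ∑ i ∈ l.toFinset,
      (boxSum m (l.erase i) (c (l.toFinset.erase i)) (Function.update w i m) -
        boxSum m (l.erase i) (c (l.toFinset.erase i)) (Function.update w i 0)) := by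
  refine (boxSum_sum m l l.toFinset _ w).trans (Finset.sum_congr rfl fun i hi => ?_)
  exact boxSum_telescope m hl (List.mem_toFinset.mp hi) _ w

theorem boxSum_cup [CharP R 2] (m : ℕ) {l : List ι} (hl : l.Nodup) {f : ι → (ι → ℕ) → R}
    (h0 : ∀ j ∈ l, ∀ v, v j = 0 → f j v = 0) (h1 : ∀ j ∈ l, ∀ v, v j = m → f j v = 1)
    (w : ι → ℕ) : boxSum m l (cup (l.map f) l.toFinset) w = 1 := by
  induction l generalizing w with
  | nil => rfl
  | cons j l ih =>
    obtain ⟨hjl, hl'⟩ := List.nodup_cons.mp hl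
    set S := (j :: l).toFinset with hS
    have hSj : S.erase j = l.toFinset := by
      rw [hS, List.toFinset_cons, Finset.erase_insert (by simpa using hjl)]
    have side_face {i : ι} (hi : i ∈ l) (a : ℕ) {b : R} (hb : ∀ v, v i = a → f i v = b) :
        boxSum m ((j :: l).erase i) (fun v => f j v * cup (l.map f) (S.erase i) v)
          (Function.update w i a) = 0 := by
      refine (boxSum_congr m fun u hu => ?_).trans (boxSum_zero m ((j :: l).erase i) _)
      have hui : u i = a := by simpa using hu i hl.not_mem_erase
      rw [cup_eq_zero_of_notMem (List.mem_map_of_mem hi) (Finset.notMem_erase i S)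
        fun v hv => (hb v (hv.trans hui)).trans (hb u hui).symm, mul_zero]
    have bottom_face : boxSum m l (fun v => f j v * cup (l.map f) l.toFinset v)
        (Function.update w j 0) = 0 := by
      refine (boxSum_congr m fun u hu => ?_).trans (boxSum_zero m l _)
      rw [h0 j List.mem_cons_self u (by simpa using hu j hjl), zero_mul]
    have top_face : boxSum m l (fun v => f j v * cup (l.map f) l.toFinset v)
        (Function.update w j m) = 1 := by
      rw [← ih hl' (fun i hi => h0 i (List.mem_cons_of_mem j hi))
        (fun i hi => h1 i (List.mem_cons_of_mem j hi)) (Function.update w j m)]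
      refine boxSum_congr m fun u hu => ?_
      rw [h1 j List.mem_cons_self u (by simpa using hu j hjl), one_mul]
    rw [List.map_cons, cup_cons_eq_coboundary _ (coboundary_cup _), boxSum_coboundary m hl,
      Finset.sum_eq_single_of_mem j (by simp)]
    · rw [List.erase_cons_head, ← hS, hSj, top_face, bottom_face, sub_zero]
    · intro i hi hij
      have hil : i ∈ l := (List.mem_cons.mp (List.mem_toFinset.mp hi)).resolve_left hij
      rw [side_face hil m (h1 i (List.mem_cons_of_mem j hil)),
        side_face hil 0 (h0 i (List.mem_cons_of_mem j hil)), sub_zero]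

end CubicalCochain

/-- Kuhn's cubical form of Sperner's lemma. -/
theorem exists_cube_forall_mem_and_notMem {ι : Type*} [Finite ι] (m : ℕ) (A : ι → Set (ι → ℕ))
    (h0 : ∀ j v, v j = 0 → v ∈ A j) (hm : ∀ j v, v j = m → v ∉ A j) :
    ∃ u : ι → ℕ, (∀ j, u j < m) ∧
      ∀ j, (Icc u (u + 1) ∩ A j).Nonempty ∧ (Icc u (u + 1) \ A j).Nonempty := by
  classical
  cases nonempty_fintype ι
  let f (j : ι) : (ι → ℕ) → ZMod 2 := (A j)ᶜ.indicator 1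
  have hcup := CubicalCochain.boxSum_cup m (Finset.nodup_toList Finset.univ) (f := f)
    (fun j _ v hv => indicator_of_notMem (not_not.mpr (h0 j v hv)) 1)
    (fun j _ v hv => indicator_of_mem (hm j v hv) 1) 0
  obtain ⟨u, hlt, -, hu⟩ :=
    CubicalCochain.exists_ne_zero_of_boxSum_ne_zero (hcup.trans_ne one_ne_zero)
  refine ⟨u, fun j => hlt j (by simp), fun j => ?_⟩
  obtain ⟨a, ha, b, hb, hab⟩ := CubicalCochain.exists_ne_of_cup_ne_zero hu
    (List.mem_map_of_mem (Finset.mem_toList.mpr (Finset.mem_univ j)))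
  have top_eq : ∑ i ∈ (Finset.univ : Finset ι).toList.toFinset, (Pi.single i 1 : ι → ℕ) = 1 := by
    rw [Finset.toList_toFinset]
    exact Finset.univ_sum_single 1
  rw [top_eq] at ha hb
  by_cases haA : a ∈ A j <;> by_cases hbA : b ∈ A j
  · simp [f, haA, hbA] at hab
  · exact ⟨⟨a, ha, haA⟩, b, hb, hbA⟩
  · exact ⟨⟨b, hb, hbA⟩, a, ha, haA⟩
  · simp [f, haA, hbA] at hab

theorem poincare_miranda {ι : Type*} [Finite ι] {U V : ι → Set (ι → unitInterval)}
    (hU : ∀ j, IsOpen (U j)) (hV : ∀ j, IsOpen (V j)) (hUV : ∀ j, Disjoint (U j) (V j))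
    (h0 : ∀ j x, x j = 0 → x ∈ U j) (h1 : ∀ j x, x j = 1 → x ∈ V j) :
    ∃ x, ∀ j, x ∉ U j ∪ V j := by
  cases nonempty_fintype ι
  by_contra! hcov
  obtain ⟨δ, hδ, hball⟩ := lebesgue_number_lemma_of_metric
    (c := Sum.elim U V) isCompact_univ (Sum.forall.mpr ⟨hU, hV⟩) fun x _ => by
      obtain ⟨j, hx | hx⟩ := hcov x
      exacts [mem_iUnion.mpr ⟨Sum.inl j, hx⟩, mem_iUnion.mpr ⟨Sum.inr j, hx⟩]
  obtain ⟨m, hm⟩ := exists_nat_one_div_lt hδ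
  have hm0 : (0 : ℝ) < m + 1 := m.cast_add_one_pos
  let x (v : ι → ℕ) : ι → unitInterval := fun k => projIcc 0 1 zero_le_one ((v k : ℝ) / (m + 1))
  obtain ⟨u, -, hu⟩ := exists_cube_forall_mem_and_notMem (m + 1) (fun j => x ⁻¹' U j)
    (fun j v hv => h0 j _ (by simp [x, hv]))
    (fun j v hv => disjoint_right.mp (hUV j) (h1 j _ (by simp [x, hv, hm0.ne'])))
  have small_cube : ∀ a ∈ Icc u (u + 1), x a ∈ Metric.ball (x u) δ := fun a ha => by
    refine ((dist_pi_le_iff (by positivity)).mpr fun k => ?_).trans_lt hm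
    have hle : (u k : ℝ) ≤ a k := mod_cast ha.1 k
    have hge : (a k : ℝ) ≤ u k + 1 := mod_cast ha.2 k
    calc dist (x a k) (x u k) ≤ dist ((a k : ℝ) / (m + 1)) (u k / (m + 1)) := by
          simpa using (LipschitzWith.projIcc zero_le_one).dist_le_mul _ _
      _ = (a k - u k) / (m + 1) := by
          rw [Real.dist_eq, ← sub_div, abs_of_nonneg (div_nonneg (sub_nonneg.mpr hle) hm0.le)]
      _ ≤ 1 / (m + 1) := by gcongr; linarith
  obtain ⟨j | j, hj⟩ := hball (x u) trivial
  · obtain ⟨b, hb, hbU⟩ := (hu j).2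
    exact hbU (hj (small_cube b hb))
  · obtain ⟨a, ha, haU⟩ := (hu j).1
    exact disjoint_left.mp (hUV j) haU (hj (small_cube a ha))

theorem poincare_miranda_of_finset {ι : Type*} (s : Finset ι) {U V : ι → Set (ι → unitInterval)}
    (hU : ∀ j ∈ s, IsOpen (U j)) (hV : ∀ j ∈ s, IsOpen (V j))
    (hUV : ∀ j ∈ s, Disjoint (U j) (V j)) (h0 : ∀ j ∈ s, ∀ x, x j = 0 → x ∈ U j)
    (h1 : ∀ j ∈ s, ∀ x, x j = 1 → x ∈ V j) (z : ι → unitInterval) :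
    ∃ x, (∀ k ∉ s, x k = z k) ∧ ∀ j ∈ s, x ∉ U j ∪ V j := by
  classical
  let e (y : s → unitInterval) : ι → unitInterval := fun k => if h : k ∈ s then y ⟨k, h⟩ else z k
  have he : Continuous e := continuous_pi fun k => by
    by_cases h : k ∈ s <;> simp only [e, h, dite_true, dite_false] <;> fun_prop
  have e_apply (y : s → unitInterval) (j : s) : e y j = y j := dif_pos j.2
  obtain ⟨y, hy⟩ := poincare_miranda (U := fun j : s => e ⁻¹' U j) (V := fun j => e ⁻¹' V j)
    (fun j => (hU j j.2).preimage he) (fun j => (hV j j.2).preimage he)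
    (fun j => (hUV j j.2).preimage e) (fun j y hj => h0 j j.2 _ ((e_apply y j).trans hj))
    (fun j y hj => h1 j j.2 _ ((e_apply y j).trans hj))
  exact ⟨e y, fun k hk => dif_neg hk, fun j hj => hy ⟨j, hj⟩⟩

/-! ### Zero-dimensional sets and partitions -/

theorem isTopologicalBasis_isClopen_of_isInducing {S T : Type*} [TopologicalSpace S]
    [TopologicalSpace T] {f : S → T} (hf : IsInducing f)
    (h : IsTopologicalBasis {s : Set T | IsClopen s}) :
    IsTopologicalBasis {s : Set S | IsClopen s} := by
  refine .of_isOpen_of_subset (fun _ hs => hs.isOpen) (h.isInducing hf) ?_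
  rintro _ ⟨s, hs, rfl⟩
  exact hs.preimage hf.continuous

theorem isTopologicalBasis_isClopen_pi {κ : Type*} {X : κ → Type*} [∀ k, TopologicalSpace (X k)]
    (h : ∀ k, IsTopologicalBasis {s : Set (X k) | IsClopen s}) :
    IsTopologicalBasis {s : Set (∀ k, X k) | IsClopen s} := by
  refine .of_isOpen_of_subset (fun _ hs => hs.isOpen) (isTopologicalBasis_pi h) ?_
  rintro _ ⟨U, F, hU, rfl⟩
  exact ⟨isClosed_set_pi fun k hk => (hU k hk).isClosed,
    isOpen_set_pi F.finite_toSet fun k hk => (hU k hk).isOpen⟩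

theorem isTopologicalBasis_isClopen_compl_of_dense {α : Type*} [LinearOrder α] [TopologicalSpace α]
    [OrderTopology α] [DenselyOrdered α] [NoMinOrder α] [NoMaxOrder α] {D : Set α}
    (hD : Dense D) : IsTopologicalBasis {s : Set ↥Dᶜ | IsClopen s} := by
  refine isTopologicalBasis_of_isOpen_of_nhds (fun _ hs => hs.isOpen) fun x U hx hU => ?_
  obtain ⟨W, hW, rfl⟩ := isOpen_induced_iff.mp hU
  obtain ⟨a, b, ⟨hax, hxb⟩, hab⟩ := mem_nhds_iff_exists_Ioo_subset.mp (hW.mem_nhds hx)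
  obtain ⟨p, hpD, hap, hpx⟩ := hD.exists_between hax
  obtain ⟨q, hqD, hxq, hqb⟩ := hD.exists_between hxb
  have Ioo_eq_Icc : ((↑) ⁻¹' Ioo p q : Set ↥Dᶜ) = (↑) ⁻¹' Icc p q := by
    ext y
    have hyp : p ≠ y := ne_of_mem_of_not_mem hpD y.2
    have hyq : (y : α) ≠ q := (ne_of_mem_of_not_mem hqD y.2).symm
    simp only [mem_preimage, mem_Ioo, mem_Icc, hyp.le_iff_lt, hyq.le_iff_lt]
  refine ⟨(↑) ⁻¹' Ioo p q, ⟨?_, isOpen_Ioo.preimage continuous_subtype_val⟩, ⟨hpx, hxq⟩,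
    preimage_mono ((Ioo_subset_Ioo hap.le hqb.le).trans hab)⟩
  rw [Ioo_eq_Icc]
  exact isClosed_Icc.preimage continuous_subtype_val

theorem isTopologicalBasis_isClopen_of_forall_notMem_dense {α κ S : Type*} [LinearOrder α]
    [TopologicalSpace α] [OrderTopology α] [DenselyOrdered α] [NoMinOrder α] [NoMaxOrder α]
    [TopologicalSpace S] {g : S → κ → α} (hg : IsInducing g) {D : Set α} (hD : Dense D)
    (hgD : ∀ x k, g x k ∉ D) : IsTopologicalBasis {s : Set S | IsClopen s} := by
  let g' (x : S) (k : κ) : ↥Dᶜ := ⟨g x k, hgD x k⟩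
  have hg' : Continuous g' := continuous_pi fun k =>
    ((continuous_apply k).comp hg.continuous).subtype_mk _
  have val_continuous : Continuous fun (y : κ → ↥Dᶜ) k => (y k : α) := by fun_prop
  exact isTopologicalBasis_isClopen_of_isInducing (.of_comp hg' val_continuous hg)
    (isTopologicalBasis_isClopen_pi fun _ => isTopologicalBasis_isClopen_compl_of_dense hD)

theorem exists_pairwise_disjoint_dense (ι : Type*) [Countable ι] :
    ∃ D : ι → Set ℝ, (∀ i, Dense (D i)) ∧ Pairwise fun i j => Disjoint (D i) (D j) := by
  obtain ⟨e, he⟩ := exists_injective_nat ι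
  refine ⟨fun i => range fun q : ℚ => (q : ℝ) + e i * √2, fun i => ?_, fun i j hij => ?_⟩
  · let φ : ℝ ≃ₜ ℝ := Homeomorph.addRight (e i * √2)
    exact φ.surjective.denseRange.comp Rat.denseRange_cast φ.continuous
  · refine disjoint_left.mpr ?_
    rintro _ ⟨q, rfl⟩ ⟨r, hr⟩
    have hne : (e i : ℤ) - e j ≠ 0 := sub_ne_zero.mpr (mod_cast he.ne hij)
    refine irrational_sqrt_two.intCast_mul hne ⟨r - q, ?_⟩
    push_cast
    linear_combination hr

theorem exists_mem_forall_notMem_of_pairwise_disjoint {α ι κ : Type*} [Fintype κ]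
    {D : ι → Set α} (hD : Pairwise fun i j => Disjoint (D i) (D j)) {s : Finset ι}
    (hs : Fintype.card κ < s.card) (v : κ → α) : ∃ j ∈ s, ∀ k, v k ∉ D j := by
  by_contra! h
  choose c hc using fun j : s => h j j.2
  obtain ⟨i, j, hij, hcij⟩ :=
    Fintype.exists_ne_map_eq_of_card_lt c (hs.trans_eq (Fintype.card_coe s).symm)
  exact disjoint_left.mp (hD (Subtype.coe_ne_coe.mpr hij)) (hc i) (hcij ▸ hc j)

section Partition

variable {T : Type*} [TopologicalSpace T]

theorem isClopen_biUnion_of_pairwise_disjoint_cover {β : Type*} {O : β → Set T}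
    (hO : ∀ b, IsOpen (O b)) (hd : Pairwise fun b c => Disjoint (O b) (O c))
    (hcov : ⋃ b, O b = univ) (s : Set β) : IsClopen (⋃ b ∈ s, O b) := by
  refine isClopen_of_disjoint_cover_open (b := ⋃ b ∈ sᶜ, O b) ?_ (isOpen_biUnion fun b _ => hO b)
    (isOpen_biUnion fun b _ => hO b) ?_
  · rw [← biUnion_union, union_compl_self, biUnion_univ, hcov]
  · simp only [disjoint_iUnion_left, disjoint_iUnion_right]
    exact fun c hc b hb => hd (ne_of_mem_of_not_mem hb hc)

theorem exists_isClopen_separating [LindelofSpace T]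
    (h : IsTopologicalBasis {s : Set T | IsClopen s}) {A B : Set T} (hA : IsClosed A)
    (hB : IsClosed B) (hAB : Disjoint A B) : ∃ E, IsClopen E ∧ A ⊆ E ∧ Disjoint E B := by
  let p (C : Set T) : Prop := IsClopen C ∧ (Disjoint C A ∨ Disjoint C B)
  have locally_p : ∀ x, ∃ C, p C ∧ x ∈ C := fun x => by
    by_cases hx : x ∈ A
    · obtain ⟨C, hC, hxC, hCB⟩ :=
        h.exists_subset_of_mem_open (disjoint_left.mp hAB hx) hB.isOpen_compl
      exact ⟨C, ⟨hC, .inr (disjoint_left.mpr hCB)⟩, hxC⟩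
    · obtain ⟨C, hC, hxC, hCA⟩ := h.exists_subset_of_mem_open hx hA.isOpen_compl
      exact ⟨C, ⟨hC, .inl (disjoint_left.mpr hCA)⟩, hxC⟩
  choose C hC hxC using locally_p
  obtain ⟨t, ht, hcov⟩ := LindelofSpace.elim_nhds_subcover C
    fun x => (hC x).1.isOpen.mem_nhds (hxC x)
  obtain ⟨O, hO, hOcov⟩ := (exists_seq_cover_iff_countable (p := p)
    ⟨∅, isClopen_empty, .inl (empty_disjoint A)⟩).mpr
      ⟨C '' t, ht.image C, forall_mem_image.mpr fun x _ => hC x, by rwa [sUnion_image]⟩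
  have hd (k : ℕ) : p (disjointed O k) := disjointedRec (p := p)
    (fun _ i hs => ⟨hs.1.diff (hO i).1,
      hs.2.imp (·.mono_left sdiff_subset) (·.mono_left sdiff_subset)⟩) (hO k)
  refine ⟨⋃ k ∈ {k | ¬Disjoint (disjointed O k) A}, disjointed O k,
    isClopen_biUnion_of_pairwise_disjoint_cover (fun k => (hd k).1.isOpen) (disjoint_disjointed O)
      (iUnion_disjointed.trans hOcov) _, fun x hx => ?_,
    disjoint_iUnion₂_left.mpr fun k hk => (hd k).2.resolve_left hk⟩
  obtain ⟨k, hk⟩ := mem_iUnion.mp ((iUnion_disjointed.trans hOcov).symm ▸ mem_univ x)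
  exact mem_biUnion (not_disjoint_iff.mpr ⟨x, hk, hx⟩) hk

theorem disjoint_closure_image_val {Z : Set T} {E F : Set Z} (hE : IsClosed E)
    (hEF : Disjoint E F) : Disjoint (closure ((↑) '' E : Set T)) ((↑) '' F) := by
  rw [disjoint_right]
  rintro _ ⟨x, hxF, rfl⟩ hx
  exact disjoint_right.mp hEF hxF (hE.closure_eq ▸ closure_subtype.mpr hx)

theorem exists_isOpen_disjoint_cover_of_isTopologicalBasis_isClopen [CompletelyNormalSpace T]
    {Z : Set T} [LindelofSpace Z] (hZ : IsTopologicalBasis {s : Set Z | IsClopen s}) {A B : Set T}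
    (hA : IsClosed A) (hB : IsClosed B) (hAB : Disjoint A B) :
    ∃ U V, IsOpen U ∧ IsOpen V ∧ Disjoint U V ∧ A ⊆ U ∧ B ⊆ V ∧ Z ⊆ U ∪ V := by
  obtain ⟨A', hA', hAA', hA'B⟩ := normal_exists_closure_subset hA hB.isOpen_compl
    (disjoint_left.mp hAB)
  obtain ⟨B', hB', hBB', hB'A'⟩ := normal_exists_closure_subset hB
    (isClosed_closure (s := A')).isOpen_compl fun _ hx hxA' => hA'B hxA' hx
  obtain ⟨E, hE, hAE, hEB⟩ := exists_isClopen_separating hZ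
    (isClosed_closure.preimage continuous_subtype_val)
    (isClosed_closure.preimage continuous_subtype_val)
    ((disjoint_left.mpr hB'A').symm.preimage ((↑) : Z → T))
  have closure_disjoint {F : Set Z} {W C : Set T} (hW : IsOpen W) (hCW : C ⊆ W)
      (hF : Disjoint F ((↑) ⁻¹' closure W)) : Disjoint (closure ((↑) '' F)) C := by
    refine (Disjoint.closure_left ?_ hW).mono_right hCW
    rw [disjoint_image_left]
    exact hF.mono_right (preimage_mono subset_closure)
  have hEB' := closure_disjoint hB' hBB' hEB
  have hEA' := closure_disjoint hA' hAA' (disjoint_compl_left_iff_subset.mpr hAE)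
  have hsep : SeparatedNhds (A ∪ (↑) '' E) (B ∪ (↑) '' Eᶜ) := by
    rw [separatedNhds_iff_disjoint]
    apply CompletelyNormalSpace.completely_normal
    · rw [closure_union, hA.closure_eq, disjoint_union_left, disjoint_union_right,
        disjoint_union_right]
      exact ⟨⟨hAB, (hEA'.mono_left subset_closure).symm⟩, hEB',
        disjoint_closure_image_val hE.isClosed disjoint_compl_right⟩
    · rw [closure_union, hB.closure_eq, disjoint_union_left, disjoint_union_right,
        disjoint_union_right]
      exact ⟨⟨hAB, hEA'.symm⟩, hEB'.mono_left subset_closure,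
        (disjoint_closure_image_val hE.compl.isClosed disjoint_compl_left).symm⟩
  obtain ⟨U, V, hU, hV, hAU, hBV, hUV⟩ := hsep
  refine ⟨U, V, hU, hV, hUV, subset_union_left.trans hAU, subset_union_left.trans hBV,
    fun x hx => ?_⟩
  by_cases hxE : (⟨x, hx⟩ : Z) ∈ E
  · exact .inl (hAU (.inr ⟨⟨x, hx⟩, hxE, rfl⟩))
  · exact .inr (hBV (.inr ⟨⟨x, hx⟩, hxE, rfl⟩))

end Partition

theorem exists_isClosed_disjoint_of_isTopologicalBasis_isClopen {ι : Type*} [Countable ι]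
    (s : Finset ι) {Z : ι → Set (ι → unitInterval)}
    (hZ : ∀ j ∈ s, IsTopologicalBasis {t : Set (Z j) | IsClopen t}) :
    ∃ L, IsClosed L ∧ (∀ j ∈ s, Disjoint L (Z j)) ∧
      ∀ z : ι → unitInterval, ∃ x ∈ L, ∀ k ∉ s, x k = z k := by
  have exists_partition : ∀ j ∈ s, ∃ U V : Set (ι → unitInterval), IsOpen U ∧ IsOpen V ∧
      Disjoint U V ∧ {x | x j = 0} ⊆ U ∧ {x | x j = 1} ⊆ V ∧ Z j ⊆ U ∪ V := fun j hj =>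
    exists_isOpen_disjoint_cover_of_isTopologicalBasis_isClopen (hZ j hj)
      (isClosed_eq (continuous_apply j) continuous_const)
      (isClosed_eq (continuous_apply j) continuous_const)
      (disjoint_left.mpr fun _ h0 h1 => zero_ne_one (h0.symm.trans h1))
  choose! U V hU hV hUV h0 h1 hZUV using exists_partition
  refine ⟨⋂ j ∈ s, (U j ∪ V j)ᶜ,
    isClosed_biInter fun j hj => ((hU j hj).union (hV j hj)).isClosed_compl,
    fun j hj => disjoint_left.mpr fun x hx hxZ => mem_iInter₂.mp hx j hj (hZUV j hj hxZ),
    fun z => ?_⟩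
  obtain ⟨x, hxz, hx⟩ := poincare_miranda_of_finset s hU hV hUV h0 h1 z
  exact ⟨x, mem_iInter₂.mpr hx, hxz⟩

theorem exists_isClosed_continuum_le_mk_disjoint_of_isInducing {ι : Type} {κ : Type*}
    [Countable ι] [Infinite ι] [Finite κ] {Y : Set (ι → unitInterval)} {f : Y → κ → ℝ}
    (hf : IsInducing f) : ∃ L, IsClosed L ∧ 𝔠 ≤ #L ∧ Disjoint L Y := by
  cases nonempty_fintype κ
  obtain ⟨D, hD, hDisj⟩ := exists_pairwise_disjoint_dense ι
  obtain ⟨s, hs⟩ := Infinite.exists_subset_card_eq ι (Fintype.card κ + 1)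
  obtain ⟨k, hk⟩ := Infinite.exists_notMem_finset s
  let Z (j : ι) : Set (ι → unitInterval) := {x | ∃ hx : x ∈ Y, ∀ i, f ⟨x, hx⟩ i ∉ D j}
  have hZ (j : ι) : IsTopologicalBasis {t : Set (Z j) | IsClopen t} := by
    have hZY : Z j ⊆ Y := fun _ hx => hx.1
    exact isTopologicalBasis_isClopen_of_forall_notMem_dense
      (hf.comp (IsEmbedding.inclusion hZY).isInducing) (hD j) fun x => x.2.2
  obtain ⟨L, hL, hLZ, hproj⟩ :=
    exists_isClosed_disjoint_of_isTopologicalBasis_isClopen s fun j _ => hZ j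
  refine ⟨L, hL, ?_, disjoint_left.mpr fun x hxL hxY => ?_⟩
  · have hsurj : Function.Surjective fun x : L => (x : ι → unitInterval) k := fun t => by
      obtain ⟨x, hx, hxt⟩ := hproj fun _ => t
      exact ⟨⟨x, hx⟩, hxt k hk⟩
    exact (Cardinal.mk_Icc_real zero_lt_one).ge.trans (Cardinal.mk_le_of_surjective hsurj)
  · obtain ⟨j, hj, hxj⟩ := exists_mem_forall_notMem_of_pairwise_disjoint hDisj
      ((Nat.lt_succ_self _).trans_eq hs.symm) (f ⟨x, hxY⟩)
    exact disjoint_left.mp (hLZ j hj) hxL ⟨hxY, hxj⟩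

/-! ### Transfinite choice -/

universe u

theorem exists_injective_forall_mem {ι α : Type u} {A : ι → Set α} (hA : ∀ i, #ι ≤ #(A i)) :
    ∃ g : ι → α, Function.Injective g ∧ ∀ i, g i ∈ A i := by
  -- A well-order of minimal type: each element has fewer than `#ι` predecessors.
  obtain ⟨_, _, hord⟩ := Cardinal.exists_ord_eq_type_lt ι
  have exists_new (i : ι) (g : ∀ j, j < i → α) : ∃ x ∈ A i, ∀ j (hj : j < i), g j hj ≠ x := by
    by_contra! hcon
    have hsub : A i ⊆ range fun j : Iio i => g j j.2 := fun x hx =>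
      let ⟨j, hj, hgj⟩ := hcon x hx
      ⟨⟨j, hj⟩, hgj⟩
    refine (Cardinal.mk_Iio_lt i hord).not_ge ?_
    calc #ι ≤ #(A i) := hA i
      _ ≤ #(range fun j : Iio i => g j j.2) := Cardinal.mk_le_mk_of_subset hsub
      _ ≤ #(Iio i) := Cardinal.mk_range_le
  choose c hcA hcne using exists_new
  let g : ι → α := wellFounded_lt.fix c
  have hg (i : ι) : g i = c i fun j _ => g j := wellFounded_lt.fix_eq c i
  refine ⟨g, .of_lt_imp_ne fun j i hji => ?_, fun i => hg i ▸ hcA i _⟩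
  exact (hcne i (fun j _ => g j) j hji).trans_eq (hg i).symm

theorem exists_pairwise_disjoint_subset {ι α : Type u} {c : Cardinal.{u}} (hc : ℵ₀ ≤ c)
    (hι : #ι ≤ c) {A : ι → Set α} (hA : ∀ i, c ≤ #(A i)) :
    ∃ P : ι → Set α, (Pairwise fun i j => Disjoint (P i) (P j)) ∧
      ∀ i, P i ⊆ A i ∧ c ≤ #(P i) := by
  induction c using Cardinal.inductionOn with | _ κ
  have index_le : #(ι × κ) ≤ #κ := by
    rw [Cardinal.mk_prod, Cardinal.lift_id, Cardinal.lift_id]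
    exact (mul_le_mul_left hι _).trans_eq (Cardinal.mul_eq_self hc)
  obtain ⟨g, hg, hgA⟩ := exists_injective_forall_mem (A := fun p : ι × κ => A p.1)
    fun p => index_le.trans (hA p.1)
  refine ⟨fun i => range fun t => g (i, t), fun i j hij => ?_, fun i => ⟨?_, ?_⟩⟩
  · refine disjoint_left.mpr ?_
    rintro _ ⟨s, rfl⟩ ⟨t, ht⟩
    exact hij (congrArg Prod.fst (hg ht)).symm
  · exact range_subset_iff.mpr fun t => hgA (i, t)
  · exact (Cardinal.mk_range_eq _ (hg.comp (Prod.mk_right_injective i))).ge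

theorem exists_injOn_forall_inter_nonempty {ι Q R : Type u} {c : Cardinal.{u}} (hc : ℵ₀ ≤ c)
    (hι : #ι ≤ c) {𝓑 : Set (Set Q)} (h𝓑 : #𝓑 ≤ c) (π : ι → Q → R) :
    ∃ X : ι → Set Q, (∀ i, InjOn (π i) (X i)) ∧
      (∀ i, ∀ B ∈ 𝓑, c ≤ #(π i '' B) → (B ∩ X i).Nonempty) ∧
      ∀ B ∈ 𝓑, c ≤ #B → (B \ ⋃ i, X i).Nonempty := by
  let I (i : ι) := {B : 𝓑 // c ≤ #(π i '' B)}
  have hI (i : ι) : #(I i) ≤ c := (Cardinal.mk_subtype_le _).trans h𝓑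
  have exists_private (i : ι) := exists_pairwise_disjoint_subset hc (hI i)
    (A := fun B : I i => π i '' B.1) fun B => B.2
  choose P hPd hP using exists_private
  let J := {B : 𝓑 // c ≤ #B}
  let A : J ⊕ (Σ i, I i) → Set Q :=
    Sum.elim (fun B => B.1) fun a => (a.2.1 : Set Q) ∩ π a.1 ⁻¹' P a.1 a.2
  have hA (a : J ⊕ (Σ i, I i)) : c ≤ #(A a) := by
    rcases a with B | ⟨i, B⟩
    · exact B.2
    · calc c ≤ #(P i B) := (hP i B).2
        _ = #(π i '' A (.inr ⟨i, B⟩)) := by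
          simp only [A, Sum.elim_inr]
          rw [image_inter_preimage, inter_eq_right.mpr (hP i B).1]
        _ ≤ #(A (.inr ⟨i, B⟩)) := Cardinal.mk_image_le
  have index_le : #(J ⊕ Σ i, I i) ≤ c := by
    rw [Cardinal.mk_sum, Cardinal.lift_id, Cardinal.lift_id, Cardinal.mk_sigma]
    refine Cardinal.add_le_of_le hc ((Cardinal.mk_subtype_le _).trans h𝓑) ?_
    calc Cardinal.sum (fun i => #(I i)) ≤ Cardinal.sum fun _ : ι => c := Cardinal.sum_le_sum _ _ hI
      _ = #ι * c := by rw [Cardinal.sum_const']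
      _ ≤ c := (mul_le_mul_left hι c).trans_eq (Cardinal.mul_eq_self hc)
  obtain ⟨g, hg, hgA⟩ := exists_injective_forall_mem fun a => index_le.trans (hA a)
  refine ⟨fun i => range fun B => g (.inr ⟨i, B⟩), ?_, fun i B hB hBc => ?_, fun B hB hBc => ?_⟩
  · rintro i _ ⟨B, rfl⟩ _ ⟨B', rfl⟩ hπ
    have hBP : π i (g (.inr ⟨i, B⟩)) ∈ P i B := (hgA (.inr ⟨i, B⟩)).2
    have hBP' : π i (g (.inr ⟨i, B'⟩)) ∈ P i B' := (hgA (.inr ⟨i, B'⟩)).2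
    rw [(hPd i).eq (not_disjoint_iff.mpr ⟨_, hBP, hπ ▸ hBP'⟩)]
  · exact ⟨_, (hgA (.inr ⟨i, ⟨B, hB⟩, hBc⟩)).1, mem_range_self _⟩
  · refine ⟨g (.inl ⟨⟨B, hB⟩, hBc⟩), hgA (.inl ⟨⟨B, hB⟩, hBc⟩), fun hX => ?_⟩
    obtain ⟨i, B', hB'⟩ := mem_iUnion.mp hX
    exact Sum.inr_ne_inl (hg hB')

theorem isTotallyDisconnected_of_injOn_of_mapsTo {α β : Type*} [TopologicalSpace α]
    [TopologicalSpace β] {f : α → β} {s : Set α} {t : Set β} (hf : ContinuousOn f s)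
    (hinj : InjOn f s) (hst : MapsTo f s t) (ht : IsTotallyDisconnected t) :
    IsTotallyDisconnected s :=
  fun u hus hu _ hx _ hy => hinj (hus hx) (hus hy) <|
    ht (f '' u) (hst.mono_left hus).image_subset (hu.image f (hf.mono hus))
      (mem_image_of_mem f hx) (mem_image_of_mem f hy)

theorem isTotallyDisconnected_irrational : IsTotallyDisconnected {x : ℝ | Irrational x} :=
  isTotallyDisconnected_iff_lt.mpr fun _ _ _ _ hxy =>
    let ⟨q, hxq, hqy⟩ := exists_rat_btwn hxy
    ⟨q, q.not_irrational, hxq, hqy⟩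

theorem continuum_le_mk_inter_irrational {s : Set ℝ} (hs : IsPreconnected s)
    (hnt : s.Nontrivial) : 𝔠 ≤ #↑(s ∩ {x | Irrational x}) := by
  obtain ⟨a, ha, b, hb, hab⟩ := hnt.exists_lt
  by_contra! hlt
  have hQ : #(range ((↑) : ℚ → ℝ)) < 𝔠 :=
    (countable_range _).le_aleph0.trans_lt Cardinal.aleph0_lt_continuum
  have hle : 𝔠 ≤ #↑(s ∩ {x | Irrational x}) + #(range ((↑) : ℚ → ℝ)) :=
    calc 𝔠 = #(Icc a b) := (Cardinal.mk_Icc_real hab).symm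
      _ ≤ #s := Cardinal.mk_le_mk_of_subset (hs.Icc_subset ha hb)
      _ ≤ _ := Cardinal.le_mk_sdiff_add_mk s (range ((↑) : ℚ → ℝ))
  exact hle.not_gt (Cardinal.add_lt_of_lt Cardinal.aleph0_le_continuum hlt hQ)

theorem mk_measurableSet_le_continuum (α : Type*) [MeasurableSpace α]
    [MeasurableSpace.CountablyGenerated α] : #{s : Set α | MeasurableSet s} ≤ 𝔠 := by
  have h := MeasurableSpace.cardinal_measurableSet_le_continuum
    ((MeasurableSpace.countable_countableGeneratingSet (α := α)).le_aleph0.trans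
      Cardinal.aleph0_le_continuum)
  rwa [MeasurableSpace.generateFrom_countableGeneratingSet] at h

theorem exists_isTotallyDisconnected_iUnion_inter_nonempty {ι Q : Type} (hι : #ι ≤ 𝔠)
    [TopologicalSpace Q] [SecondCountableTopology Q] {π : ι → Q → ℝ} (hπ : ∀ i, Continuous (π i))
    (hinj : Function.Injective fun x i => π i x) :
    ∃ X : ι → Set Q, (∀ i, IsTotallyDisconnected (X i)) ∧
      (∀ C, IsClosed C → IsPreconnected C → C.Nontrivial → (C ∩ ⋃ i, X i).Nonempty) ∧
      ∀ L, IsClosed L → 𝔠 ≤ #L → (L \ ⋃ i, X i).Nonempty := by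
  borelize Q
  obtain ⟨X, hXinj, hXmeets, hXavoids⟩ := exists_injOn_forall_inter_nonempty
    Cardinal.aleph0_le_continuum hι (mk_measurableSet_le_continuum Q) π
  let T (i : ι) : Set Q := π i ⁻¹' {t | Irrational t}
  refine ⟨fun i => X i ∩ T i, fun i => ?_, fun C hC hCconn hCnt => ?_, fun L hL hLc => ?_⟩
  · exact isTotallyDisconnected_of_injOn_of_mapsTo (hπ i).continuousOn
      ((hXinj i).mono inter_subset_left) (fun _ hx => hx.2) isTotallyDisconnected_irrational
  · obtain ⟨x, hx, y, hy, hxy⟩ := hCnt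
    obtain ⟨i, hi⟩ := Function.ne_iff.mp (hinj.ne hxy)
    have image_large : 𝔠 ≤ #(π i '' (C ∩ T i)) := by
      rw [image_inter_preimage]
      exact continuum_le_mk_inter_irrational (hCconn.image _ (hπ i).continuousOn)
        ⟨_, mem_image_of_mem _ hx, _, mem_image_of_mem _ hy, hi⟩
    have hCT : MeasurableSet (C ∩ T i) :=
      hC.measurableSet.inter ((hπ i).measurable IsGδ.setOfPred_irrational.measurableSet)
    obtain ⟨z, ⟨hzC, hzT⟩, hzX⟩ := hXmeets i _ hCT image_large
    exact ⟨z, hzC, mem_iUnion.mpr ⟨i, hzX, hzT⟩⟩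
  · obtain ⟨x, hxL, hx⟩ := hXavoids L hL.measurableSet hLc
    exact ⟨x, hxL, fun hX => hx (iUnion_mono (fun i => inter_subset_left) hX)⟩

/-- There is a sequence of totally disconnected subspaces of the Hilbert cube whose
complement `Y` is infinite dimensional (it embeds into no `ℝ^N`) while every compact
subspace of `Y` is totally disconnected. -/
theorem stmt15 :
    ∃ X : ℕ → Set (ℕ → unitInterval),
      (∀ i, IsTotallyDisconnected (X i)) ∧
      (∀ K : Set (ℕ → unitInterval),
        K ⊆ (⋃ i, X i)ᶜ → IsCompact K → IsTotallyDisconnected K) ∧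
      (∀ N : ℕ, ¬ ∃ f : ↥((⋃ i, X i)ᶜ) → (Fin N → ℝ), Topology.IsEmbedding f) := by
  obtain ⟨X, hX, hXmeets, hXavoids⟩ := exists_isTotallyDisconnected_iUnion_inter_nonempty
    (π := fun i (x : ℕ → unitInterval) => (x i : ℝ))
    (Cardinal.mk_nat.trans_le Cardinal.aleph0_le_continuum) (fun i => by fun_prop)
    fun x y h => funext fun i => Subtype.ext (congrFun h i)
  refine ⟨X, hX, fun K hKX hK S hSK hS => ?_, fun N ⟨f, hf⟩ => ?_⟩
  · by_contra hS'
    obtain ⟨x, hxS, hxX⟩ := hXmeets (closure S) isClosed_closure hS.closure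
      ((not_subsingleton_iff.mp hS').mono subset_closure)
    exact hKX (closure_minimal hSK hK.isClosed hxS) hxX
  · obtain ⟨L, hL, hLc, hLX⟩ := exists_isClosed_continuum_le_mk_disjoint_of_isInducing hf.isInducing
    obtain ⟨x, hxL, hxX⟩ := hXavoids L hL hLc
    exact disjoint_left.mp hLX hxL hxX
end

section
/- For every sequence (H_i)_{i ∈ ℕ} of zero-dimensional subspaces of the Hilbert cube [0,1]^ℕ, there exists a nondegenerate continuum avoiding all of them: a compact connected subset A ⊆ [0,1]^ℕ containing at least two points such that A ∩ H_i = ∅ for every i ∈ ℕ. -/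
open Set

/-!
Call a closed set a partition between two disjoint sets if its complement splits into two disjoint
open sets, each containing one of them. In the cube `[0,1]^ι`, partitions `Kᵢ` between the opposite
faces `xᵢ = 0` and `xᵢ = 1` always have a common point (Poincaré–Miranda). Between disjoint closed
sets there is also a partition avoiding a given zero-dimensional subspace. So choose a partition
`Kᵢ` between the faces of index `i + 1` that avoids `Hᵢ`, and let `L` be the intersection of all the
`Kᵢ`. Then `L` meets every partition between the faces `x₀ = 0` and `x₀ = 1`, and by compactness
this is possible only if a connected component of `L` meets both of these faces.

Poincaré–Miranda follows from its discrete form. Let `aᵢ` be functions to `ZMod 2` on the integer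
points of a box with `aᵢ = 0` on the face `xᵢ = 0` and `aᵢ = 1` on the face `xᵢ = k`. The mod 2
cochain `da₁ ⌣ ⋯ ⌣ daₙ` is the coboundary of `a₁ da₂ ⌣ ⋯ ⌣ daₙ`, so by Stokes' formula and
induction on the dimension its sum over the box is `1`; and it vanishes on each unit cube on which
some `aᵢ` is constant. Hence there is a unit cube on which none of the `aᵢ` is constant.
-/

/-! ### Mod 2 cubical cochains -/

section Grid

open Finset fwdDiff

lemma sum_sum_erase_eq_zero_of_symm {ι R : Type*} [DecidableEq ι] [Semiring R] [CharP R 2]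
    (S : Finset ι) (F : ι → ι → R) (hF : ∀ i j, F i j = F j i) :
    ∑ j ∈ S, ∑ i ∈ S.erase j, F i j = 0 := by
  rw [sum_sigma']
  refine sum_involution (fun p _ => ⟨p.2, p.1⟩) (fun p _ => ?_) (fun p hp _ h => ?_)
    (fun p hp => ?_) (fun p _ => rfl)
  · rw [hF p.1, CharTwo.add_self_eq_zero]
  · have hne : p.2 ≠ p.1 := (mem_erase.1 (mem_sigma.1 hp).2).1
    exact hne (congrArg Sigma.fst h)
  · simp only [mem_sigma, mem_erase] at hp ⊢
    exact ⟨hp.2.2, hp.2.1.symm, hp.1⟩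

variable {ι M R : Type*} [DecidableEq ι] [AddCommGroup M] [Ring R]

/-- The mod 2 coboundary of a cubical cochain on the grid `ι → ℕ`, where `g S x` is the value of the
cochain on the unit cube with least vertex `x` and set of directions `S`. The signs of the usual
coboundary are left out, so that it squares to zero only in characteristic two. -/
def cubicalCoboundary (g : Finset ι → (ι → ℕ) → M) (S : Finset ι) (x : ι → ℕ) : M :=
  ∑ j ∈ S, Δ_[Pi.single j 1] (g (S.erase j)) x

/-- The cochain `d(f₁ d(f₂ ⋯ d fₘ))` of a list of functions `f₁, …, fₘ` on the grid, which in
characteristic two is the cup product `df₁ ⌣ ⋯ ⌣ dfₘ`. For the empty list it is the constant `1` on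
cubes of every dimension, whose mod 2 coboundary vanishes. -/
def iteratedCoboundary : List ((ι → ℕ) → R) → Finset ι → (ι → ℕ) → R
  | [] => 1
  | f :: l => cubicalCoboundary fun S => f * iteratedCoboundary l S

/-- The vertices of the unit cube with least vertex `x` and set of directions `S`. -/
def gridCube (S : Finset ι) (x : ι → ℕ) : Set (ι → ℕ) :=
  Set.Icc x (x + ∑ j ∈ S, Pi.single j 1)

lemma cubicalCoboundary_cubicalCoboundary [CharP R 2] (g : Finset ι → (ι → ℕ) → R)
    (S : Finset ι) (x : ι → ℕ) : cubicalCoboundary (cubicalCoboundary g) S x = 0 := by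
  have expand (j : ι) : Δ_[Pi.single j 1] (cubicalCoboundary g (S.erase j)) x =
      ∑ i ∈ S.erase j,
        Δ_[Pi.single j 1] (Δ_[Pi.single i 1] (g ((S.erase j).erase i))) x := by
    simp only [cubicalCoboundary, fwdDiff, sum_sub_distrib]
  simp only [cubicalCoboundary, expand]
  refine sum_sum_erase_eq_zero_of_symm S
    (fun i j => Δ_[Pi.single j 1] (Δ_[Pi.single i 1] (g ((S.erase j).erase i))) x) fun i j => ?_
  simp only [fwdDiff, erase_right_comm (a := i), add_right_comm x (Pi.single i 1)]
  abel

lemma cubicalCoboundary_iteratedCoboundary [CharP R 2] (l : List ((ι → ℕ) → R))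
    (S : Finset ι) (x : ι → ℕ) : cubicalCoboundary (iteratedCoboundary l) S x = 0 := by
  cases l with
  | nil => simp [cubicalCoboundary, iteratedCoboundary, fwdDiff]
  | cons f l => exact cubicalCoboundary_cubicalCoboundary _ S x

lemma iteratedCoboundary_cons [CharP R 2] (f : (ι → ℕ) → R) (l : List ((ι → ℕ) → R))
    (S : Finset ι) (x : ι → ℕ) :
    iteratedCoboundary (f :: l) S x = ∑ j ∈ S,
      Δ_[Pi.single j 1] f x * iteratedCoboundary l (S.erase j) (x + Pi.single j 1) := by
  have leibniz (j : ι) : Δ_[Pi.single j 1] (f * iteratedCoboundary l (S.erase j)) x =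
      Δ_[Pi.single j 1] f x * iteratedCoboundary l (S.erase j) (x + Pi.single j 1) +
        f x * Δ_[Pi.single j 1] (iteratedCoboundary l (S.erase j)) x := by
    simp only [fwdDiff, Pi.mul_apply]
    noncomm_ring
  have closed : ∑ j ∈ S, Δ_[Pi.single j 1] (iteratedCoboundary l (S.erase j)) x = 0 :=
    cubicalCoboundary_iteratedCoboundary l S x
  simp only [iteratedCoboundary, cubicalCoboundary, leibniz]
  rw [sum_add_distrib, ← mul_sum, closed, mul_zero, add_zero]

lemma self_mem_gridCube (S : Finset ι) (x : ι → ℕ) : x ∈ gridCube S x :=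
  left_mem_Icc.2 le_self_add

lemma gridCube_erase_subset {S : Finset ι} {j : ι} (hj : j ∈ S) (x : ι → ℕ) :
    gridCube (S.erase j) (x + Pi.single j 1) ⊆ gridCube S x := by
  rw [gridCube, gridCube, add_assoc, add_sum_erase S (fun i => Pi.single i 1) hj]
  exact Icc_subset_Icc_left le_self_add

lemma apply_eq_of_mem_gridCube {S : Finset ι} {j : ι} (hj : j ∉ S) {x y : ι → ℕ}
    (hy : y ∈ gridCube S x) : y j = x j := by
  have hsum : (∑ i ∈ S, Pi.single i (1 : ℕ) : ι → ℕ) j = 0 := by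
    rw [Finset.sum_apply]
    exact sum_eq_zero fun i hi => Pi.single_eq_of_ne (ne_of_mem_of_not_mem hi hj).symm 1
  have hle : y j ≤ x j + (∑ i ∈ S, Pi.single i (1 : ℕ) : ι → ℕ) j := hy.2 j
  rw [hsum] at hle
  exact hle.antisymm (hy.1 j)

lemma iteratedCoboundary_eq_zero_of_eqOn_const [CharP R 2] {l : List ((ι → ℕ) → R)}
    {f : (ι → ℕ) → R} (hf : f ∈ l) {S : Finset ι} {x : ι → ℕ} {c : R}
    (hc : ∀ y ∈ gridCube S x, f y = c) : iteratedCoboundary l S x = 0 := by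
  induction l generalizing S x with
  | nil => cases hf
  | cons g l ih =>
    rw [iteratedCoboundary_cons]
    refine sum_eq_zero fun j hj => ?_
    have hsub := gridCube_erase_subset hj x
    rcases List.mem_cons.1 hf with rfl | hf
    · rw [fwdDiff, hc _ (hsub (self_mem_gridCube _ _)), hc _ (self_mem_gridCube _ _), sub_self,
        zero_mul]
    · rw [ih hf fun y hy => hc y (hsub hy), mul_zero]

variable [Fintype ι]

/-- The least vertices of the unit cubes with directions `S` that subdivide the box of side `k`
through `y`: the coordinates in `S` run over `0, …, k - 1` and the others are those of `y`. -/
def gridBox (k : ℕ) (S : Finset ι) (y : ι → ℕ) : Finset (ι → ℕ) :=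
  Fintype.piFinset fun i => if i ∈ S then range k else {y i}

lemma mem_gridBox {k : ℕ} {S : Finset ι} {x y : ι → ℕ} :
    x ∈ gridBox k S y ↔ ∀ i, if i ∈ S then x i < k else x i = y i := by
  refine Fintype.mem_piFinset.trans (forall_congr' fun i => ?_)
  split_ifs <;> simp

lemma apply_eq_of_mem_gridBox {k : ℕ} {S : Finset ι} {x y : ι → ℕ} (hx : x ∈ gridBox k S y)
    {j : ι} (hj : j ∉ S) : x j = y j := by
  simpa only [if_neg hj] using mem_gridBox.1 hx j

lemma sum_gridBox_eq_sum_range_sum_gridBox_erase {N : Type*} [AddCommMonoid N] (k : ℕ)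
    {S : Finset ι} {j : ι} (hj : j ∈ S) (y : ι → ℕ) (g : (ι → ℕ) → N) :
    ∑ x ∈ gridBox k S y, g x =
      ∑ t ∈ range k, ∑ x ∈ gridBox k (S.erase j) (Function.update y j t), g x := by
  have hmaps : ∀ x ∈ gridBox k S y, x j ∈ range k := fun x hx => by
    simpa only [if_pos hj, Finset.mem_range] using mem_gridBox.1 hx j
  rw [← sum_fiberwise_of_maps_to hmaps]
  refine sum_congr rfl fun t ht => sum_congr ?_ fun _ _ => rfl
  ext x
  simp only [Finset.mem_filter, mem_gridBox, Finset.mem_erase]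
  grind

lemma sum_gridBox_update_add_single {N : Type*} [AddCommMonoid N] (k : ℕ)
    {S : Finset ι} {j : ι} (hj : j ∉ S) (y : ι → ℕ) (t : ℕ) (g : (ι → ℕ) → N) :
    ∑ x ∈ gridBox k S (Function.update y j t), g (x + Pi.single j 1) =
      ∑ x ∈ gridBox k S (Function.update y j (t + 1)), g x := by
  have hshift (x : ι → ℕ) : x + Pi.single j 1 ∈ gridBox k S (Function.update y j (t + 1)) ↔
      x ∈ gridBox k S (Function.update y j t) := by
    simp only [mem_gridBox]
    refine forall_congr' fun i => ?_
    rcases eq_or_ne i j with rfl | hi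
    · simp [hj]
    · simp [hi]
  refine sum_bij (fun x _ => x + Pi.single j 1) (fun x hx => (hshift x).2 hx)
    (fun _ _ _ _ => add_right_cancel) (fun x hx => ?_) (fun x _ => Eq.refl (g (x + Pi.single j 1)))
  have hxj : x j = t + 1 := (apply_eq_of_mem_gridBox hx hj).trans (Function.update_self ..)
  have hx' : x - Pi.single j 1 + Pi.single j 1 = x :=
    tsub_add_cancel_of_le (update_le_iff.2 ⟨by omega, fun i _ => Nat.zero_le _⟩)
  exact ⟨x - Pi.single j 1, (hshift _).1 (hx'.symm ▸ hx), hx'⟩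

lemma sum_gridBox_fwdDiff (k : ℕ) {S : Finset ι} {j : ι} (hj : j ∈ S) (y : ι → ℕ)
    (g : (ι → ℕ) → M) :
    ∑ x ∈ gridBox k S y, Δ_[Pi.single j 1] g x =
      ∑ x ∈ gridBox k (S.erase j) (Function.update y j k), g x -
        ∑ x ∈ gridBox k (S.erase j) (Function.update y j 0), g x := by
  simp only [sum_gridBox_eq_sum_range_sum_gridBox_erase k hj, fwdDiff, sum_sub_distrib,
    sum_gridBox_update_add_single k (notMem_erase j S)]
  rw [← sum_sub_distrib]
  exact sum_range_sub (fun t => ∑ x ∈ gridBox k (S.erase j) (Function.update y j t), g x) k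

lemma sum_gridBox_cubicalCoboundary (k : ℕ) (S : Finset ι) (y : ι → ℕ)
    (g : Finset ι → (ι → ℕ) → M) :
    ∑ x ∈ gridBox k S y, cubicalCoboundary g S x =
      ∑ j ∈ S, (∑ x ∈ gridBox k (S.erase j) (Function.update y j k), g (S.erase j) x -
        ∑ x ∈ gridBox k (S.erase j) (Function.update y j 0), g (S.erase j) x) := by
  simp only [cubicalCoboundary]
  rw [sum_comm]
  exact sum_congr rfl fun j hj => sum_gridBox_fwdDiff k hj y (g (S.erase j))

lemma sum_gridBox_iteratedCoboundary [CharP R 2] (k : ℕ) (a : ι → (ι → ℕ) → R)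
    {l : List ι} (hl : l.Nodup) (h0 : ∀ i ∈ l, ∀ x : ι → ℕ, x i = 0 → a i x = 0)
    (h1 : ∀ i ∈ l, ∀ x : ι → ℕ, x i = k → a i x = 1) (y : ι → ℕ) :
    ∑ x ∈ gridBox k l.toFinset y, iteratedCoboundary (l.map a) l.toFinset x = 1 := by
  induction l generalizing y with
  | nil => simp [gridBox, iteratedCoboundary]
  | cons i l ih =>
    obtain ⟨hil, hl⟩ := List.nodup_cons.1 hl
    rw [List.forall_mem_cons] at h0 h1
    have h_erase : (i :: l).toFinset.erase i = l.toFinset := by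
      rw [List.toFinset_cons, erase_insert (by rwa [List.mem_toFinset])]
    have other_faces (j : ι) (hj : j ∈ l) (t : ℕ) (c : R) (hc : ∀ x : ι → ℕ, x j = t → a j x = c) :
        ∑ x ∈ gridBox k ((i :: l).toFinset.erase j) (Function.update y j t),
          (a i * iteratedCoboundary (l.map a) ((i :: l).toFinset.erase j)) x = 0 := by
      refine sum_eq_zero fun x hx => ?_
      have hxj : x j = t :=
        (apply_eq_of_mem_gridBox hx (notMem_erase j _)).trans (Function.update_self ..)
      rw [Pi.mul_apply, iteratedCoboundary_eq_zero_of_eqOn_const (List.mem_map_of_mem hj)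
        fun z hz => hc z ((apply_eq_of_mem_gridCube (notMem_erase j _) hz).trans hxj), mul_zero]
    have main_faces (t : ℕ) (c : R) (hc : ∀ x : ι → ℕ, x i = t → a i x = c) :
        ∑ x ∈ gridBox k l.toFinset (Function.update y i t),
          (a i * iteratedCoboundary (l.map a) l.toFinset) x = c := by
      rw [← mul_one c, ← ih hl h0.2 h1.2 (Function.update y i t), mul_sum]
      refine sum_congr rfl fun x hx => ?_
      have hxi : x i = t := (apply_eq_of_mem_gridBox hx (by rwa [List.mem_toFinset])).trans
        (Function.update_self ..)
      rw [Pi.mul_apply, hc x hxi]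
    rw [List.map_cons, iteratedCoboundary, sum_gridBox_cubicalCoboundary, sum_eq_single i]
    · rw [h_erase, main_faces k 1 h1.1, main_faces 0 0 h0.1, sub_zero]
    · intro j hj hji
      have hjl : j ∈ l := (List.mem_cons.1 (List.mem_toFinset.1 hj)).resolve_left hji
      rw [other_faces j hjl k 1 (h1.2 j hjl), other_faces j hjl 0 0 (h0.2 j hjl), sub_zero]
    · exact fun hi => absurd (List.mem_toFinset.2 List.mem_cons_self) hi

end Grid

theorem exists_forall_inter_Icc_nonempty {ι : Type*} [Finite ι] {k : ℕ} (hk : k ≠ 0)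
    {E F : ι → Set (ι → ℕ)} (hEF : ∀ i, E i ∪ F i = univ) (h0 : ∀ i x, x i = 0 → x ∈ E i)
    (h1 : ∀ i x, x i = k → x ∈ F i) :
    ∃ v : ι → ℕ, ∀ i, (E i ∩ Icc v (v + 1)).Nonempty ∧ (F i ∩ Icc v (v + 1)).Nonempty := by
  classical
  have := Fintype.ofFinite ι
  -- `E i` may meet the face `x i = k`, where the value must be `1` nevertheless.
  let a (i : ι) (x : ι → ℕ) : ZMod 2 := if x ∈ E i ∧ x i ≠ k then 0 else 1
  have hsum := sum_gridBox_iteratedCoboundary k a (Finset.univ : Finset ι).nodup_toList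
    (fun i _ x hx => if_pos ⟨h0 i x hx, by omega⟩) (fun i _ x hx => if_neg fun h => h.2 hx) 0
  rw [Finset.toList_toFinset] at hsum
  obtain ⟨v, -, hv⟩ := Finset.exists_ne_zero_of_sum_ne_zero (hsum ▸ one_ne_zero)
  have hcube : gridCube (Finset.univ : Finset ι) v = Icc v (v + 1) := by
    rw [gridCube, show ∑ j : ι, Pi.single j 1 = (1 : ι → ℕ) from Finset.univ_sum_single 1]
  have nonconst (i : ι) (c : ZMod 2) : ∃ x ∈ Icc v (v + 1), a i x ≠ c := by
    by_contra! hc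
    exact hv (iteratedCoboundary_eq_zero_of_eqOn_const
      (List.mem_map_of_mem (Finset.mem_toList.2 (Finset.mem_univ i))) (hcube ▸ hc))
  refine ⟨v, fun i => ⟨?_, ?_⟩⟩
  · obtain ⟨x, hx, hax⟩ := nonconst i 1
    exact ⟨x, (by_contra fun h => hax (if_neg h) : x ∈ E i ∧ x i ≠ k).1, hx⟩
  · obtain ⟨x, hx, hax⟩ := nonconst i 0
    have hx' : x ∈ E i → x i = k := by simpa [a] using hax
    have hxEF : x ∈ E i ∪ F i := hEF i ▸ mem_univ x
    exact ⟨x, hxEF.elim (fun h => h1 i x (hx' h)) id, hx⟩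

/-! ### Partitions -/

section Partition

lemma disjoint_union_image_val_compl {X : Type*} {A B H : Set X} {W : Set H} (hAB : Disjoint A B)
    (hAW : (↑) ⁻¹' A ⊆ W) (hWB : Disjoint W ((↑) ⁻¹' B)) :
    Disjoint (A ∪ (↑) '' W) (B ∪ (↑) '' Wᶜ) := by
  refine disjoint_union_left.2 ⟨disjoint_union_right.2 ⟨hAB, ?_⟩,
    disjoint_union_right.2 ⟨disjoint_image_left.2 hWB, ?_⟩⟩
  · exact disjoint_image_right.2 (disjoint_compl_right_iff_subset.2 hAW)
  · exact (disjoint_image_iff Subtype.val_injective).2 disjoint_compl_right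

variable {X Y : Type*} [TopologicalSpace X] [TopologicalSpace Y]

/-- `K` is a partition between `A` and `B`: it is the complement of a union of two disjoint open
sets, one containing `A` and the other one containing `B`. -/
def IsPartitionBetween (K A B : Set X) : Prop :=
  ∃ U V, IsOpen U ∧ IsOpen V ∧ A ⊆ U ∧ B ⊆ V ∧ Disjoint U V ∧ K = (U ∪ V)ᶜ

lemma IsPartitionBetween.isClosed {K A B : Set X} (h : IsPartitionBetween K A B) :
    IsClosed K := by
  obtain ⟨U, V, hU, hV, -, -, -, rfl⟩ := h
  exact (hU.union hV).isClosed_compl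

lemma IsPartitionBetween.preimage {K A B : Set Y} (h : IsPartitionBetween K A B) {f : X → Y}
    (hf : Continuous f) : IsPartitionBetween (f ⁻¹' K) (f ⁻¹' A) (f ⁻¹' B) := by
  obtain ⟨U, V, hU, hV, hAU, hBV, hUV, rfl⟩ := h
  exact ⟨f ⁻¹' U, f ⁻¹' V, hU.preimage hf, hV.preimage hf, preimage_mono hAU, preimage_mono hBV,
    hUV.preimage f, rfl⟩

lemma exists_isPartitionBetween_disjoint_of_separatedNhds {A B H : Set X} {W : Set H}
    (h : SeparatedNhds (A ∪ (↑) '' W) (B ∪ (↑) '' Wᶜ)) :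
    ∃ K, IsPartitionBetween K A B ∧ Disjoint K H := by
  obtain ⟨U, V, hU, hV, hAU, hBV, hUV⟩ := h
  rw [union_subset_iff, image_subset_iff] at hAU hBV
  refine ⟨(U ∪ V)ᶜ, ⟨U, V, hU, hV, hAU.1, hBV.1, hUV, rfl⟩,
    disjoint_compl_left_iff_subset.2 fun x hx => ?_⟩
  by_cases hxW : ⟨x, hx⟩ ∈ W
  · exact Or.inl (hAU.2 hxW)
  · exact Or.inr (hBV.2 hxW)

end Partition

/-! ### The Poincaré–Miranda theorem -/

section Miranda

variable {ι : Type*}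

/-- The slice of the cube where the `i`-th coordinate is `t`, a face for `t = 0` and `t = 1`. -/
def cubeFace (i : ι) (t : unitInterval) : Set (ι → unitInterval) := {x | x i = t}

lemma isClosed_cubeFace (i : ι) (t : unitInterval) : IsClosed (cubeFace i t) :=
  isClosed_eq (continuous_apply i) continuous_const

lemma disjoint_cubeFace (i : ι) {s t : unitInterval} (hst : s ≠ t) :
    Disjoint (cubeFace i s) (cubeFace i t) :=
  Set.disjoint_left.2 fun _ hs ht => hst (hs.symm.trans ht)

/-- The point `v / k` of the cube, used to subdivide it into cubes of side `1 / k`. Coordinates are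
clamped to `[0, 1]`, so that every grid vector `v` gives a point of the cube. -/
noncomputable def gridPoint (k : ℕ) (v : ι → ℕ) : ι → unitInterval :=
  fun i => projIcc (0 : ℝ) 1 zero_le_one (v i / k)

lemma dist_gridPoint_le [Fintype ι] (k : ℕ) {v w : ι → ℕ} (hw : w ∈ Icc v (v + 1)) :
    dist (gridPoint k w) (gridPoint k v) ≤ 1 / k := by
  refine (dist_pi_le_iff (by positivity)).2 fun i => (abs_projIcc_sub_projIcc zero_le_one).trans ?_
  have hlo : (v i : ℝ) ≤ w i := by exact_mod_cast hw.1 i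
  have hhi : (w i : ℝ) ≤ v i + 1 := by exact_mod_cast hw.2 i
  rw [← sub_div, abs_of_nonneg (div_nonneg (sub_nonneg.2 hlo) k.cast_nonneg)]
  gcongr
  linarith

lemma gridPoint_mem_cubeFace_zero (k : ℕ) {v : ι → ℕ} {i : ι} (hi : v i = 0) :
    gridPoint k v ∈ cubeFace i 0 := by
  simp [cubeFace, gridPoint, hi]

lemma gridPoint_mem_cubeFace_one {k : ℕ} (hk : k ≠ 0) {v : ι → ℕ} {i : ι} (hi : v i = k) :
    gridPoint k v ∈ cubeFace i 1 := by
  simp [cubeFace, gridPoint, hi, hk]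

theorem iInter_nonempty_of_isPartitionBetween_cubeFace_of_finite [Finite ι]
    {K : ι → Set (ι → unitInterval)}
    (hK : ∀ i, IsPartitionBetween (K i) (cubeFace i 0) (cubeFace i 1)) : (⋂ i, K i).Nonempty := by
  classical
  have := Fintype.ofFinite ι
  by_contra hempty
  choose U V hU hV hU0 hV1 hUV hKUV using hK
  have hcover : univ ⊆ ⋃ s : ι ⊕ ι, Sum.elim U V s := fun x _ => by
    obtain ⟨i, hi⟩ : ∃ i, x ∉ K i := by
      by_contra! hx
      exact hempty ⟨x, mem_iInter.2 hx⟩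
    rw [hKUV, notMem_compl_iff] at hi
    exact mem_iUnion.2 (hi.elim (fun h => ⟨.inl i, h⟩) fun h => ⟨.inr i, h⟩)
  obtain ⟨δ, hδ, hball⟩ := lebesgue_number_lemma_of_metric isCompact_univ
    (Sum.forall.2 ⟨hU, hV⟩) hcover
  obtain ⟨m, hm⟩ := exists_nat_one_div_lt hδ
  obtain ⟨v, hv⟩ := exists_forall_inter_Icc_nonempty m.succ_ne_zero
    (E := fun i => gridPoint (m + 1) ⁻¹' (V i)ᶜ) (F := fun i => gridPoint (m + 1) ⁻¹' (U i)ᶜ)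
    (fun i => by
      rw [← preimage_union, ← compl_inter, (hUV i).symm.inter_eq, compl_empty, preimage_univ])
    (fun i x hx =>
      (hUV i).subset_compl_right (hU0 i (gridPoint_mem_cubeFace_zero _ hx)))
    (fun i x hx =>
      (hUV i).subset_compl_left (hV1 i (gridPoint_mem_cubeFace_one m.succ_ne_zero hx)))
  have mem_ball : ∀ w ∈ Icc v (v + 1),
      gridPoint (m + 1) w ∈ Metric.ball (gridPoint (m + 1) v) δ := fun w hw =>
    (dist_gridPoint_le (m + 1) hw).trans_lt (by exact_mod_cast hm)
  obtain ⟨i | i, hi⟩ := hball (gridPoint (m + 1) v) (mem_univ _)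
  · obtain ⟨w, hwU, hw⟩ := (hv i).2
    exact hwU (hi (mem_ball w hw))
  · obtain ⟨w, hwV, hw⟩ := (hv i).1
    exact hwV (hi (mem_ball w hw))

theorem iInter_nonempty_of_isPartitionBetween_cubeFace {K : ι → Set (ι → unitInterval)}
    (hK : ∀ i, IsPartitionBetween (K i) (cubeFace i 0) (cubeFace i 1)) : (⋂ i, K i).Nonempty := by
  classical
  refine CompactSpace.iInter_nonempty (fun i => (hK i).isClosed) fun s => ?_
  let extend (x : s → unitInterval) (i : ι) : unitInterval := if h : i ∈ s then x ⟨i, h⟩ else 0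
  have hextend : Continuous extend := continuous_pi fun i => by
    by_cases h : i ∈ s
    · simpa only [extend, dif_pos h] using continuous_apply _
    · simpa only [extend, dif_neg h] using continuous_const
  have preimage_face (i : s) (t : unitInterval) : extend ⁻¹' cubeFace i t = cubeFace i t := by
    ext x
    simp [extend, cubeFace]
  obtain ⟨x, hx⟩ := iInter_nonempty_of_isPartitionBetween_cubeFace_of_finite
    (K := fun i : s => extend ⁻¹' K i) fun i => by
      simpa only [preimage_face] using (hK i).preimage hextend
  exact ⟨extend x, mem_iInter₂.2 fun i hi => mem_iInter.1 hx ⟨i, hi⟩⟩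

end Miranda

/-! ### Zero-dimensional subspaces and continua -/

section ZeroDim

open TopologicalSpace

variable {X : Type*} [TopologicalSpace X]

lemma exists_isClopen_subset_disjoint_of_isTopologicalBasis [LindelofSpace X] {b : Set (Set X)}
    (hb : IsTopologicalBasis b) (hb_clopen : ∀ s ∈ b, IsClopen s) {C D : Set X} (hC : IsClosed C)
    (hD : IsClosed D) (hCD : Disjoint C D) : ∃ W, IsClopen W ∧ C ⊆ W ∧ Disjoint W D := by
  classical
  have exists_clopen (x : X) : ∃ U, IsClopen U ∧ x ∈ U ∧ (Disjoint C U ∨ Disjoint U D) := by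
    obtain ⟨T, hT, hxT, hTCD⟩ : ∃ T, IsClosed T ∧ x ∉ T ∧ (C = T ∨ D = T) := by
      by_cases hx : x ∈ C
      · exact ⟨D, hD, disjoint_left.1 hCD hx, .inr rfl⟩
      · exact ⟨C, hC, hx, .inl rfl⟩
    obtain ⟨U, hU, hxU, hUT⟩ := hb.exists_subset_of_mem_open (u := Tᶜ) hxT hT.isOpen_compl
    replace hUT : Disjoint U T := subset_compl_iff_disjoint_right.1 hUT
    refine ⟨U, hb_clopen U hU, hxU, ?_⟩
    rcases hTCD with rfl | rfl
    exacts [.inl hUT.symm, .inr hUT]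
  choose U hU hxU hUCD using exists_clopen
  obtain ⟨s, hs, hsU⟩ := countable_cover_nhds fun x => (hU x).isOpen.mem_nhds (hxU x)
  rcases isEmpty_or_nonempty X
  · exact ⟨∅, isClopen_empty, fun x _ => isEmptyElim x, empty_disjoint D⟩
  have hs_ne : s.Nonempty := nonempty_iff_ne_empty.2 fun h =>
    empty_ne_univ (α := X) (by simpa [h] using hsU)
  obtain ⟨f, rfl⟩ := hs.exists_eq_range hs_ne
  have hf (x : X) : ∃ n, x ∈ U (f n) := by
    simpa only [biUnion_range] using mem_iUnion.1 ((biUnion_range ▸ hsU) ▸ mem_univ x)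
  have hfind : Continuous fun x => Nat.find (hf x) := continuous_discrete_rng.2 fun n => by
    rw [preimage_find_eq_disjointed fun n => U (f n)]
    exact (disjointedRec (p := IsClopen) (fun _ _ ht => ht.diff (hU _)) (hU (f n))).isOpen
  refine ⟨(fun x => Nat.find (hf x)) ⁻¹' {n | Disjoint (U (f n)) D},
    (isClopen_discrete _).preimage hfind, fun x hx => ?_, disjoint_left.2 fun x hx hxD => ?_⟩
  · exact (hUCD _).resolve_left fun h => disjoint_left.1 h hx (Nat.find_spec (hf x))
  · exact disjoint_left.1 hx (Nat.find_spec (hf x)) hxD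

lemma disjoint_closure_union_image_val_compl {A B V H : Set X} {W : Set H} (hA : IsClosed A)
    (hV : IsOpen V) (hBV : B ⊆ V) (hAB : Disjoint A B) (hW : IsClosed W) (hAW : (↑) ⁻¹' A ⊆ W)
    (hWV : Disjoint W ((↑) ⁻¹' V)) :
    Disjoint (closure (A ∪ (↑) '' W)) (B ∪ (↑) '' Wᶜ) := by
  have hWB : Disjoint W ((↑) ⁻¹' B) := hWV.mono_right (preimage_mono hBV)
  have closure_disjoint : Disjoint (closure (A ∪ (↑) '' W)) B := by
    rw [closure_union, hA.closure_eq]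
    exact hAB.union_left (((disjoint_image_left.2 hWV).closure_left hV).mono_right hBV)
  have trace_closure : (↑) ⁻¹' closure (A ∪ (↑) '' W) ⊆ W := by
    rw [closure_union, hA.closure_eq, preimage_union,
      ← Topology.IsInducing.subtypeVal.closure_eq_preimage_closure_image, hW.closure_eq]
    exact union_subset hAW Subset.rfl
  exact (disjoint_union_image_val_compl closure_disjoint trace_closure hWB).mono_left
    subset_union_left

theorem exists_isPartitionBetween_disjoint_of_isTopologicalBasis_isClopen [CompletelyNormalSpace X]
    {A B H : Set X} [LindelofSpace H] (hA : IsClosed A) (hB : IsClosed B)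
    (hAB : Disjoint A B) {b : Set (Set H)} (hb : IsTopologicalBasis b)
    (hb_clopen : ∀ s ∈ b, IsClopen s) :
    ∃ K, IsPartitionBetween K A B ∧ Disjoint K H := by
  obtain ⟨U, hU, hAU, hUB⟩ :=
    normal_exists_closure_subset hA hB.isOpen_compl hAB.subset_compl_right
  obtain ⟨V, hV, hBV, hVU⟩ := normal_exists_closure_subset hB isClosed_closure.isOpen_compl
    (subset_compl_comm.1 hUB)
  have hUV : Disjoint (closure U) (closure V) := subset_compl_iff_disjoint_left.1 hVU
  obtain ⟨W, hW, hUW, hWV⟩ := exists_isClopen_subset_disjoint_of_isTopologicalBasis hb hb_clopen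
    (isClosed_closure.preimage continuous_subtype_val)
    (isClosed_closure.preimage continuous_subtype_val) (hUV.preimage ((↑) : H → X))
  replace hUW : (↑) ⁻¹' U ⊆ W := (preimage_mono subset_closure).trans hUW
  replace hWV : Disjoint W ((↑) ⁻¹' V) := hWV.mono_right (preimage_mono subset_closure)
  have hAW := disjoint_closure_union_image_val_compl hA hV hBV hAB hW.isClosed
    ((preimage_mono hAU).trans hUW) hWV
  have hBW := disjoint_closure_union_image_val_compl hB hU hAU hAB.symm hW.compl.isClosed
    ((preimage_mono hBV).trans hWV.subset_compl_left) (disjoint_compl_left_iff_subset.2 hUW)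
  rw [compl_compl] at hBW
  exact exists_isPartitionBetween_disjoint_of_separatedNhds
    (separatedNhds_iff_disjoint.2 (CompletelyNormalSpace.completely_normal hAW hBW.symm))

theorem exists_isClopen_of_forall_disjoint_connectedComponent [CompactSpace X] [T2Space X]
    {A B : Set X} (hA : IsClosed A) (hB : IsClosed B)
    (h : ∀ x ∈ A, Disjoint (connectedComponent x) B) :
    ∃ W, IsClopen W ∧ A ⊆ W ∧ Disjoint W B := by
  let π : X → ConnectedComponents X := ConnectedComponents.mk
  have hπ : Continuous π := ConnectedComponents.continuous_coe
  have hAB : π '' A ⊆ (π '' B)ᶜ := by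
    rintro _ ⟨x, hx, rfl⟩ ⟨y, hy, hyx⟩
    exact disjoint_left.1 (h x hx) (ConnectedComponents.coe_eq_coe'.1 hyx) hy
  obtain ⟨W, hW, hAW, hWB⟩ := exists_clopen_of_closed_subset_open
    (hA.isCompact.image hπ).isClosed (hB.isCompact.image hπ).isClosed.isOpen_compl hAB
  exact ⟨π ⁻¹' W, hW.preimage hπ, image_subset_iff.1 hAW,
    disjoint_left.2 fun x hx hxB => hWB hx (mem_image_of_mem π hxB)⟩

theorem exists_isConnected_of_forall_isPartitionBetween [CompactSpace X] [T2Space X]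
    {A B L : Set X} (hA : IsClosed A) (hB : IsClosed B) (hL : IsClosed L) (hAB : Disjoint A B)
    (h : ∀ K, IsPartitionBetween K A B → (K ∩ L).Nonempty) :
    ∃ C ⊆ L, IsCompact C ∧ IsConnected C ∧ (C ∩ A).Nonempty ∧ (C ∩ B).Nonempty := by
  have : CompactSpace L := isCompact_iff_compactSpace.1 hL.isCompact
  by_contra! hno
  have hcomp : ∀ x ∈ ((↑) ⁻¹' A : Set L), Disjoint (connectedComponent x) ((↑) ⁻¹' B) := by
    intro x hx
    refine disjoint_left.2 fun y hy hyB => ?_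
    refine (hno ((↑) '' connectedComponent x) (Subtype.coe_image_subset L _)
      (isClosed_connectedComponent.isCompact.image continuous_subtype_val)
      (isConnected_connectedComponent.image _ continuous_subtype_val.continuousOn)
      ⟨x, mem_image_of_mem _ mem_connectedComponent, hx⟩).subset ⟨mem_image_of_mem _ hy, hyB⟩
  obtain ⟨W, hW, hAW, hWB⟩ := exists_isClopen_of_forall_disjoint_connectedComponent
    (hA.preimage continuous_subtype_val) (hB.preimage continuous_subtype_val) hcomp
  have isClosed_image {S : Set L} (hS : IsClosed S) : IsClosed ((↑) '' S : Set X) :=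
    hL.isClosedMap_subtype_val S hS
  have hdisj : Disjoint (A ∪ (↑) '' W) (B ∪ (↑) '' Wᶜ)  :=
    disjoint_union_image_val_compl hAB hAW hWB
  obtain ⟨K, hK, hKL⟩ := exists_isPartitionBetween_disjoint_of_separatedNhds
    (normal_separation (hA.union (isClosed_image hW.isClosed))
      (hB.union (isClosed_image hW.compl.isClosed)) hdisj)
  exact (h K hK).ne_empty hKL.inter_eq

end ZeroDim

/-- For any sequence of zero-dimensional subspaces of the Hilbert cube (subspaces whose
topology has a basis of clopen sets) there is a nondegenerate continuum (a compact
connected set with at least two points) disjoint from all of them. -/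
theorem stmt16 (H : ℕ → Set (ℕ → unitInterval))
    (hH : ∀ i, ∃ B : Set (Set ↥(H i)),
      TopologicalSpace.IsTopologicalBasis B ∧ ∀ s ∈ B, IsClopen s) :
    ∃ A : Set (ℕ → unitInterval),
      IsCompact A ∧ IsConnected A ∧ A.Nontrivial ∧ ∀ i, A ∩ H i = ∅ := by
  have hfaces (i : ℕ) : Disjoint (cubeFace i 0) (cubeFace i 1) := disjoint_cubeFace i zero_ne_one
  choose b hb hb_clopen using hH
  choose K hK hKH using fun i => exists_isPartitionBetween_disjoint_of_isTopologicalBasis_isClopen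
    (isClosed_cubeFace (i + 1) 0) (isClosed_cubeFace (i + 1) 1) (hfaces (i + 1)) (hb i)
    (hb_clopen i)
  have meets_all (P : Set (ℕ → unitInterval))
      (hP : IsPartitionBetween P (cubeFace 0 0) (cubeFace 0 1)) : (P ∩ ⋂ i, K i).Nonempty := by
    obtain ⟨x, hx⟩ := iInter_nonempty_of_isPartitionBetween_cubeFace
      (K := fun i => Nat.casesOn i P K) (Nat.rec hP fun i _ => hK i)
    rw [mem_iInter] at hx
    exact ⟨x, hx 0, mem_iInter.2 fun i => hx (i + 1)⟩
  obtain ⟨A, hAK, hA_compact, hA_conn, ⟨x, hxA, hx⟩, ⟨y, hyA, hy⟩⟩ :=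
    exists_isConnected_of_forall_isPartitionBetween (isClosed_cubeFace 0 0) (isClosed_cubeFace 0 1)
      (isClosed_iInter fun i => (hK i).isClosed) (hfaces 0) meets_all
  refine ⟨A, hA_compact, hA_conn, ⟨x, hxA, y, hyA, (hfaces 0).ne_of_mem hx hy⟩, fun i => ?_⟩
  exact ((hKH i).mono_left (hAK.trans (iInter_subset K i))).inter_eq
end
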